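/- arXiv:1001.0253 — 2 statements merged into one kernel-verified Lean document; each statement's English description precedes it below -/
import Mathlib

section
/- The nilpotency problem for cellular automata with a spreading state is undecidable: consider codes (n, r, f, θ) where f : (Fin(n+1))^{2r+1} → Fin(n+1) is a local rule of a CA N on the alphabet Fin(n+1) and θ ∈ Fin(n+1), restricted to those codes for which θ is spreading for N (this restriction is a decidable subset of codes). The predicate 'N is nilpotent' on this set of codes is not a computable predicate. -/
/-- The configuration space of a one-dimensional cellular automaton over alphabet `B`. -/
abbrev Config (B : Type*) := ℤ → B

/-- The global map induced by the local rule `f` of radius `r`. -/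
def caMap {B : Type*} (r : ℕ) (f : (Fin (2 * r + 1) → B) → B) : Config B → Config B :=
  fun x i => f fun j => x (i - (r : ℤ) + ((j : ℕ) : ℤ))

/-- A state `θ` is spreading for the local rule `f` if `f(u) = θ` whenever the
letter `θ` occurs in `u`. -/
def SpreadingRule {B : Type*} {n : ℕ} (f : (Fin n → B) → B) (θ : B) : Prop :=
  ∀ u : Fin n → B, (∃ j, u j = θ) → f u = θ

/-- A map on configurations is nilpotent if some iterated image is a singleton. -/
def Nilpotent {B : Type*} (F : Config B → Config B) : Prop :=
  ∃ (J : ℕ) (c : Config B), Set.range F^[J] = {c}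

/-- A canonical effective encoding of local rules between finite alphabets:
a rule on `m^k` input words is identified with a table indexed by `Fin (m ^ k)`. -/
instance rulePrimcodable (k m : ℕ) : Primcodable ((Fin k → Fin m) → Fin m) :=
  Primcodable.ofEquiv (Fin (m ^ k) → Fin m)
    (Equiv.arrowCongr finFunctionFinEquiv (Equiv.refl (Fin m)))

/-- A code `(n, r, f, θ)` of a cellular automaton on the alphabet `Fin (n+1)` with a
distinguished state: a radius `r`, a local rule `f` and a state `θ`. -/
abbrev NilCode := Σ (n : ℕ) (r : ℕ),
  ((Fin (2 * r + 1) → Fin (n + 1)) → Fin (n + 1)) × Fin (n + 1)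


namespace NilCA

/-- Abstract array of crossings extracted from a tiling. -/
structure Arr (N : ℕ) (a b : ℕ → ℕ) (w u : ℕ → ℕ → ℕ) (ka kb : ℕ → ℕ)
    (P Q : ℕ → ℕ → Prop) : Prop where
  wlt : ∀ m n, w m n < 16
  ult : ∀ m n, u m n < 16
  pq : ∀ m n, m < N → n < N → P m n ∨ Q m n
  nq : ∀ m n, m < N → n < N → ¬ Q m n → w m n % 4 = 0
  np : ∀ m n, m < N → n < N → ¬ P m n → u m n % 4 = 0
  e : ∀ m n, m < N → n < N → P m n → Q m n →
    w m n % 4 ≠ 0 ∧ u m n % 4 ≠ 0 ∧ w m n % 4 = b n ∧ u m n % 4 = a m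
  wi : ∀ m n, m < N → n < N → P m n → w m (n+1) = (w m n + 1) % 16
  wk : ∀ m n, m < N → n < N → ¬ P m n → w m (n+1) = w m n
  ui : ∀ m n, m < N → n < N → Q m n → u (m+1) n = (u m n + 1) % 16
  uk : ∀ m n, m < N → n < N → ¬ Q m n → u (m+1) n = u m n
  cq : ∀ m n, m < N → n < N → ¬ Q m n → w m n ≠ 0 → b n = w m n / 4 ∧ u m n % 4 = ka m
  cp : ∀ m n, m < N → n < N → ¬ P m n → u m n ≠ 0 → a m = u m n / 4 ∧ w m n % 4 = kb n
  il : ∀ m, m < N → ∃ p κ, ∀ n, n < N → (n + p) % 4 ≠ 0 →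
    b n = (n + p) % 4 ∧ u (m+1) n % 4 = κ
  jl : ∀ n, n < N → ∃ q κ, ∀ m, m < N → (m + q) % 4 ≠ 0 →
    a m = (m + q) % 4 ∧ w m (n+1) % 4 = κ

variable {N : ℕ} {a b : ℕ → ℕ} {w u : ℕ → ℕ → ℕ} {ka kb : ℕ → ℕ} {P Q : ℕ → ℕ → Prop}

theorem Arr.swap (h : Arr N a b w u ka kb P Q) :
    Arr N b a (fun m n => u n m) (fun m n => w n m) kb ka (fun m n => Q n m) (fun m n => P n m) where
  wlt m n := h.ult n m
  ult m n := h.wlt n m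
  pq m n hm hn := (h.pq n m hn hm).symm
  nq m n hm hn := h.np n m hn hm
  np m n hm hn := h.nq n m hn hm
  e m n hm hn h1 h2 := by
    have := h.e n m hn hm h2 h1
    tauto
  wi m n hm hn := h.ui n m hn hm
  wk m n hm hn := h.uk n m hn hm
  ui m n hm hn := h.wi n m hn hm
  uk m n hm hn := h.wk n m hn hm
  cq m n hm hn := h.cp n m hn hm
  cp m n hm hn := h.cq n m hn hm
  il := h.jl
  jl := h.il

theorem phase_unique {b : ℕ → ℕ} {p q s : ℕ}
    (h1 : ∀ n, s ≤ n → n < s + 4 → (n + p) % 4 ≠ 0 → b n = (n + p) % 4)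
    (h2 : ∀ n, s ≤ n → n < s + 4 → (n + q) % 4 ≠ 0 → b n = (n + q) % 4) : p % 4 = q % 4 := by
  have a0 := h1 s (by omega) (by omega)
  have a1 := h1 (s+1) (by omega) (by omega)
  have a2 := h1 (s+2) (by omega) (by omega)
  have a3 := h1 (s+3) (by omega) (by omega)
  have b0 := h2 s (by omega) (by omega)
  have b1 := h2 (s+1) (by omega) (by omega)
  have b2 := h2 (s+2) (by omega) (by omega)
  have b3 := h2 (s+3) (by omega) (by omega)
  have e : ∀ d x, (s + d + x) % 4 = ((s + x) % 4 + d) % 4 := by intros; omega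
  by_contra hne
  have hne : (s+p)%4 ≠ (s+q)%4 := by omega
  have l1 : (s+p)%4 < 4 := by omega
  have l2 : (s+q)%4 < 4 := by omega
  rw [e] at a1 a2 a3 b1 b2 b3
  generalize (s+p)%4 = x at *
  generalize (s+q)%4 = y at *
  interval_cases x <;> interval_cases y <;> simp at * <;> omega

/-- Row facts: common column phase and increments of the interline counters. -/
theorem Arr.rows (h : Arr N a b w u ka kb P Q) (hN : 8 ≤ N) :
    ∃ p k0, (∀ n, n < N → (n + p) % 4 ≠ 0 → b n = (n + p) % 4) ∧
      (∀ m, m < N → ∀ n, n < N → (n + p) % 4 ≠ 0 → u (m+1) n % 4 = (k0 + m) % 4) ∧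
      (∀ m, 1 ≤ m → m < N → ∀ n, n < N → (n + p) % 4 ≠ 0 → Q m n) := by
  obtain ⟨p, k0, h0⟩ := h.il 0 (by omega)
  have hil : ∀ m, m < N → ∃ κ, ∀ n, n < N → (n + p) % 4 ≠ 0 → u (m+1) n % 4 = κ := by
    intro m hm
    obtain ⟨p', κ, h'⟩ := h.il m hm
    have hp : p % 4 = p' % 4 := phase_unique (b := b) (s := 0)
      (fun n _ h2 h3 => (h0 n (by omega) h3).1) (fun n _ h2 h3 => (h' n (by omega) h3).1)
    exact ⟨κ, fun n hn hh => (h' n hn (by omega)).2⟩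
  -- a witness column
  obtain ⟨n1, hn1, hn1'⟩ : ∃ n1, n1 + 1 < N ∧ (n1 + p) % 4 = 1 := ⟨(5 - p % 4) % 4, by omega, by omega⟩
  have key : ∀ m, 1 ≤ m → m < N → ∀ n, n < N → (n + p) % 4 ≠ 0 → Q m n := by
    intro m hm1 hm
    obtain ⟨κ, hκ⟩ := hil m hm
    obtain ⟨κ', hκ'⟩ := hil (m-1) (by omega)
    rw [show m - 1 + 1 = m by omega] at hκ'
    by_contra hcon
    push Not at hcon
    obtain ⟨n, hn, hnp, hq⟩ := hcon
    have e1 := hκ n hn hnp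
    have e2 := hκ' n hn hnp
    rw [h.uk m n hm hn hq] at e1
    have hall : ∀ n, n < N → (n + p) % 4 ≠ 0 → ¬ Q m n := by
      intro n hn hnp hQ
      have e3 := hκ n hn hnp
      have e4 := hκ' n hn hnp
      rw [h.ui m n hm hn hQ] at e3
      omega
    have q1 := hall n1 (by omega) (by omega)
    have q2 := hall (n1+1) (by omega) (by omega)
    have z1 := h.nq m n1 hm (by omega) q1
    have z2 := h.nq m (n1+1) hm (by omega) q2
    have p1 : P m n1 := (h.pq m n1 hm (by omega)).resolve_right q1
    rw [h.wi m n1 hm (by omega) p1] at z2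
    omega
  refine ⟨p, k0, fun n hn hh => (h0 n hn hh).1, ?_, key⟩
  intro m
  induction m with
  | zero =>
    intro hm n hn hh
    have := (h0 n hn hh).2
    rw [this]
    have : k0 < 4 := by omega
    omega
  | succ m ih =>
    intro hm n hn hh
    have := ih (by omega) n hn hh
    rw [h.ui (m+1) n hm hn (key (m+1) (by omega) hm n hn hh)]
    omega

/-- The level-zero structure. -/
theorem Arr.level (h : Arr N a b w u ka kb P Q) (hN : 8 ≤ N) :
    ∃ p q, (∀ n, n < N → (n + p) % 4 ≠ 0 → b n = (n + p) % 4) ∧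
      (∀ m, m < N → (m + q) % 4 ≠ 0 → a m = (m + q) % 4) ∧
      (∀ m n, m < N → n < N → 1 ≤ m → (n + p) % 4 ≠ 0 → u m n % 4 = (m + q) % 4) ∧
      (∀ m n, m < N → n < N → 1 ≤ n → (m + q) % 4 ≠ 0 → w m n % 4 = (n + p) % 4) ∧
      (∀ m n, m < N → n < N → 1 ≤ m → (n + p) % 4 ≠ 0 → Q m n) ∧
      (∀ m n, m < N → n < N → 1 ≤ n → (m + q) % 4 ≠ 0 → P m n) ∧
      (∀ m n, m < N → n < N → 1 ≤ m → (n + p) % 4 ≠ 0 → (m + q) % 4 = 0 → ¬ P m n) ∧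
      (∀ m n, m < N → n < N → 1 ≤ n → (m + q) % 4 ≠ 0 → (n + p) % 4 = 0 → ¬ Q m n) := by
  obtain ⟨p, k, hb, hu, hQ⟩ := h.rows hN
  obtain ⟨q, l, ha, hw, hP⟩ := h.swap.rows hN
  have aux : ∀ {N : ℕ} {a b : ℕ → ℕ} {w u : ℕ → ℕ → ℕ} {ka kb : ℕ → ℕ} {P Q : ℕ → ℕ → Prop}
      (h : Arr N a b w u ka kb P Q) (hN : 8 ≤ N) (p k q : ℕ)
      (hu : ∀ m, m < N → ∀ n, n < N → (n + p) % 4 ≠ 0 → u (m+1) n % 4 = (k + m) % 4)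
      (hQ : ∀ m, 1 ≤ m → m < N → ∀ n, n < N → (n + p) % 4 ≠ 0 → Q m n)
      (ha : ∀ m, m < N → (m + q) % 4 ≠ 0 → a m = (m + q) % 4),
      ∀ m n, m < N → n < N → 1 ≤ m → (n + p) % 4 ≠ 0 → u m n % 4 = (m + q) % 4 := by
    intro N a b w u ka kb P Q h hN p k q hu hQ ha
    have hu' : ∀ m n, m < N → n < N → 1 ≤ m → (n + p) % 4 ≠ 0 → u m n % 4 = (m + (k + 3)) % 4 := by
      intro m n hm hn h1 hh
      have := hu (m-1) (by omega) n hn hh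
      rw [show m - 1 + 1 = m by omega] at this
      omega
    have hph : q % 4 = (k+3) % 4 := by
      apply phase_unique (b := a) (s := 1)
      · intro m h1 h2 h3
        exact ha m (by omega) h3
      · intro m h1 h2 h3
        obtain ⟨n, hn, hnn⟩ : ∃ n, n < N ∧ (n + p) % 4 ≠ 0 := ⟨(5 - p % 4) % 4, by omega, by omega⟩
        have e1 := hu' m n (by omega) hn h1 hnn
        have q1 := hQ m h1 (by omega) n hn hnn
        have p1 : P m n := by
          by_contra hp
          have := h.np m n (by omega) hn hp
          omega
        have := h.e m n (by omega) hn p1 q1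
        omega
    intro m n hm hn h1 hh
    rw [hu' m n hm hn h1 hh]
    omega
  have U := aux h hN p k q hu hQ ha
  have W := aux h.swap hN q l p hw hP hb
  refine ⟨p, q, hb, ha, U, fun m n hm hn h1 h2 => W n m hn hm h1 h2, fun m n hm hn h1 h2 => hQ m h1 hm n hn h2,
    fun m n hm hn h1 h2 => hP n h1 hn m hm h2, ?_, ?_⟩
  · intro m n hm hn h1 hp hq hP'
    have := h.e m n hm hn hP' (hQ m h1 hm n hn hp)
    have := U m n hm hn h1 hp
    omega
  · intro m n hm hn h1 hp hq hQ'
    have := h.e m n hm hn (hP n h1 hn m hm hp) hQ'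
    have := W n m hn hm h1 hp
    omega

end NilCA

namespace NilCA

variable {N : ℕ} {a b : ℕ → ℕ} {w u : ℕ → ℕ → ℕ} {ka kb : ℕ → ℕ} {P Q : ℕ → ℕ → Prop}

set_option linter.unusedSimpArgs false in
set_option maxHeartbeats 2000000 in
theorem Arr.sub (h : Arr N a b w u ka kb P Q) (hN : 12 ≤ N) :
    ∃ α β, 1 ≤ α ∧ α ≤ 4 ∧ 1 ≤ β ∧ β ≤ 4 ∧
      (∀ j, β + j < N → j % 4 ≠ 0 → b (β + j) = j % 4) ∧
      (∀ i, α + i < N → i % 4 ≠ 0 → a (α + i) = i % 4) ∧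
      (∀ i j, α + i + 1 < N → β + j < N → j % 4 ≠ 0 → u (α + i + 1) (β + j) % 4 = (i + 1) % 4) ∧
      (∀ i j, α + i < N → β + j + 1 < N → i % 4 ≠ 0 → w (α + i) (β + j + 1) % 4 = (j + 1) % 4) ∧
      (∀ i r j, α + 4 * i + 4 < N → β + 4 * j < N → r ≤ 3 →
        u (α + (4 * i + r) + 1) (β + 4 * j) = u (α + 4 * (i + 1)) (β + 4 * j)) ∧
      (∀ i r j, β + 4 * j + 4 < N → α + 4 * i < N → r ≤ 3 →
        w (α + 4 * i) (β + (4 * j + r) + 1) = w (α + 4 * i) (β + 4 * (j + 1))) ∧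
      Arr ((N - 8) / 4) (fun m => a (α + 4 * m)) (fun n => b (β + 4 * n))
        (fun m n => w (α + 4 * m) (β + 4 * n)) (fun m n => u (α + 4 * m) (β + 4 * n))
        (fun m => ka (α + 4 * m)) (fun n => kb (β + 4 * n))
        (fun m n => P (α + 4 * m) (β + 4 * n)) (fun m n => Q (α + 4 * m) (β + 4 * n)) := by
  obtain ⟨p, q, hb, ha, hu, hw, hQ, hP, hnP, hnQ⟩ := h.level (by omega)
  obtain ⟨α, hα⟩ : ∃ α, α = 4 - q % 4 := ⟨_, rfl⟩
  obtain ⟨β, hβ⟩ : ∃ β, β = 4 - p % 4 := ⟨_, rfl⟩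
  have Ku : ∀ i r j, α + 4 * i + 4 < N → β + 4 * j < N → r ≤ 3 →
      u (α + (4 * i + r) + 1) (β + 4 * j) = u (α + 4 * (i + 1)) (β + 4 * j) := by
    intro i r j hi hj hr
    have st : ∀ s, 1 ≤ s → s ≤ 3 →
        u (α + 4 * i + s + 1) (β + 4 * j) = u (α + 4 * i + s) (β + 4 * j) := by
      intro s h1 h2
      exact h.uk _ _ (by omega) (by omega)
        (hnQ _ _ (by omega) (by omega) (by omega) (by omega) (by omega))
    have s1 := st 1 (by omega) (by omega)
    have s2 := st 2 (by omega) (by omega)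
    have s3 := st 3 (by omega) (by omega)
    simp only [Nat.mul_add, ← Nat.add_assoc, Nat.reduceAdd, Nat.mul_one, Nat.add_zero] at *
    have : r = 0 ∨ r = 1 ∨ r = 2 ∨ r = 3 := by omega
    rcases this with rfl | rfl | rfl | rfl <;> simp only [Nat.add_assoc, Nat.reduceAdd] at * <;> simp_all
  have Kw : ∀ i r j, β + 4 * j + 4 < N → α + 4 * i < N → r ≤ 3 →
      w (α + 4 * i) (β + (4 * j + r) + 1) = w (α + 4 * i) (β + 4 * (j + 1)) := by
    intro i r j hj hi hr
    have st : ∀ s, 1 ≤ s → s ≤ 3 →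
        w (α + 4 * i) (β + 4 * j + s + 1) = w (α + 4 * i) (β + 4 * j + s) := by
      intro s h1 h2
      exact h.wk _ _ (by omega) (by omega)
        (hnP _ _ (by omega) (by omega) (by omega) (by omega) (by omega))
    have s1 := st 1 (by omega) (by omega)
    have s2 := st 2 (by omega) (by omega)
    have s3 := st 3 (by omega) (by omega)
    simp only [Nat.mul_add, ← Nat.add_assoc, Nat.reduceAdd, Nat.mul_one, Nat.add_zero] at *
    have : r = 0 ∨ r = 1 ∨ r = 2 ∨ r = 3 := by omega
    rcases this with rfl | rfl | rfl | rfl <;> simp only [Nat.add_assoc, Nat.reduceAdd] at * <;> simp_all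
  refine ⟨α, β, by omega, by omega, by omega, by omega, ?_, ?_, ?_, ?_, Ku, Kw, ?_⟩
  · intro j hj h4
    rw [hb _ hj (by omega)]; omega
  · intro j hj h4
    rw [ha _ hj (by omega)]; omega
  · intro i j hi hj h4
    rw [hu _ _ hi hj (by omega) (by omega)]; omega
  · intro i j hi hj h4
    rw [hw _ _ hi hj (by omega) (by omega)]; omega
  · constructor
    · intros; apply h.wlt
    · intros; apply h.ult
    · intro m n hm hn; exact h.pq _ _ (by omega) (by omega)
    · intro m n hm hn; exact h.nq _ _ (by omega) (by omega)
    · intro m n hm hn; exact h.np _ _ (by omega) (by omega)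
    · intro m n hm hn; exact h.e _ _ (by omega) (by omega)
    · intro m n hm hn h1
      rw [← Kw m 0 n (by omega) (by omega) (by omega)]
      exact h.wi _ _ (by omega) (by omega) h1
    · intro m n hm hn h1
      rw [← Kw m 0 n (by omega) (by omega) (by omega)]
      exact h.wk _ _ (by omega) (by omega) h1
    · intro m n hm hn h1
      rw [← Ku m 0 n (by omega) (by omega) (by omega)]
      exact h.ui _ _ (by omega) (by omega) h1
    · intro m n hm hn h1
      rw [← Ku m 0 n (by omega) (by omega) (by omega)]
      exact h.uk _ _ (by omega) (by omega) h1
    · intro m n hm hn; exact h.cq _ _ (by omega) (by omega)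
    · intro m n hm hn; exact h.cp _ _ (by omega) (by omega)
    · intro m hm
      have hst : ∀ n, n < (N-8)/4 → w (α + 4 * m + 1) (β + 4 * n) =
          4 * ((n + w (α + 4 * m + 1) β / 4) % 4) := by
        intro n
        induction n with
        | zero =>
          intro hn
          have := hw (α + 4 * m + 1) β (by omega) (by omega) (by omega) (by omega)
          have := h.wlt (α + 4 * m + 1) β
          simp only [Nat.mul_zero, Nat.add_zero]
          omega
        | succ n ih =>
          intro hn
          have st : ∀ s, s ≤ 3 → w (α + 4 * m + 1) (β + 4 * n + s + 1)
              = (w (α + 4 * m + 1) (β + 4 * n + s) + 1) % 16 := fun s hs =>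
            h.wi _ _ (by omega) (by omega) (hP _ _ (by omega) (by omega) (by omega) (by omega))
          have s0 := st 0 (by omega)
          have s1 := st 1 (by omega)
          have s2 := st 2 (by omega)
          have s3 := st 3 (by omega)
          have := ih (by omega)
          simp only [Nat.add_zero, Nat.add_assoc, Nat.reduceAdd, Nat.mul_add, Nat.mul_one] at *
          omega
      refine ⟨w (α + 4 * m + 1) β / 4, ka (α + 4 * m + 1), fun n hn hne => ?_⟩
      have e := hst n hn
      have c := h.cq (α + 4 * m + 1) (β + 4 * n) (by omega) (by omega)
        (hnQ _ _ (by omega) (by omega) (by omega) (by omega) (by omega)) (by omega)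
      rw [← Ku m 0 n (by omega) (by omega) (by omega)]
      refine ⟨by omega, c.2⟩
    · intro n hn
      have hst : ∀ m, m < (N-8)/4 → u (α + 4 * m) (β + 4 * n + 1) =
          4 * ((m + u α (β + 4 * n + 1) / 4) % 4) := by
        intro m
        induction m with
        | zero =>
          intro hm
          have := hu α (β + 4 * n + 1) (by omega) (by omega) (by omega) (by omega)
          have := h.ult α (β + 4 * n + 1)
          simp only [Nat.mul_zero, Nat.add_zero]
          omega
        | succ m ih =>
          intro hm
          have st : ∀ s, s ≤ 3 → u (α + 4 * m + s + 1) (β + 4 * n + 1)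
              = (u (α + 4 * m + s) (β + 4 * n + 1) + 1) % 16 := fun s hs =>
            h.ui _ _ (by omega) (by omega) (hQ _ _ (by omega) (by omega) (by omega) (by omega))
          have s0 := st 0 (by omega)
          have s1 := st 1 (by omega)
          have s2 := st 2 (by omega)
          have s3 := st 3 (by omega)
          have := ih (by omega)
          simp only [Nat.add_zero, Nat.add_assoc, Nat.reduceAdd, Nat.mul_add, Nat.mul_one] at *
          omega
      refine ⟨u α (β + 4 * n + 1) / 4, kb (β + 4 * n + 1), fun m hm hne => ?_⟩
      have e := hst m hm
      have c := h.cp (α + 4 * m) (β + 4 * n + 1) (by omega) (by omega)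
        (hnP _ _ (by omega) (by omega) (by omega) (by omega) (by omega)) (by omega)
      rw [← Kw m 0 n (by omega) (by omega) (by omega)]
      refine ⟨by omega, c.2⟩

/-- The forced hierarchical structure, up to level `K` on a window of size `L`. -/
theorem force (K L : ℕ) : ∃ N0, ∀ (N : ℕ) (a b : ℕ → ℕ) (w u : ℕ → ℕ → ℕ) (ka kb : ℕ → ℕ)
    (P Q : ℕ → ℕ → Prop), Arr N a b w u ka kb P Q → N0 ≤ N →
    ∃ α β, α + L ≤ N ∧ β + L ≤ N ∧
      (∀ l < K, ∀ i < L, ∀ j < L, j % 4 ^ l = 0 → j / 4 ^ l % 4 ≠ 0 →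
        b (β + j) = j / 4 ^ l % 4 ∧ u (α + i + 1) (β + j) % 4 = (i / 4 ^ l + 1) % 4) ∧
      (∀ l < K, ∀ i < L, ∀ j < L, i % 4 ^ l = 0 → i / 4 ^ l % 4 ≠ 0 →
        a (α + i) = i / 4 ^ l % 4 ∧ w (α + i) (β + j + 1) % 4 = (j / 4 ^ l + 1) % 4) := by
  induction K with
  | zero => exact ⟨L, fun N a b w u ka kb P Q h hN => ⟨0, 0, by omega, by omega, by simp, by simp⟩⟩
  | succ K ih =>
    obtain ⟨N0, hN0⟩ := ih
    refine ⟨4 * N0 + 4 * L + 40, fun N a b w u ka kb P Q h hN => ?_⟩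
    obtain ⟨α, β, hα, hα', hβ, hβ', hb, ha, hu, hw, Ku, Kw, hs⟩ := h.sub (by omega)
    obtain ⟨α', β', hL1, hL2, H1, H2⟩ := hN0 _ _ _ _ _ _ _ _ _ hs (by omega)
    refine ⟨α + 4 * α', β + 4 * β', by omega, by omega, ?_, ?_⟩
    · intro l hl i hi j hj h0 h1
      rcases l with _ | l
      · simp only [pow_zero, Nat.div_one] at *
        constructor
        · rw [Nat.add_assoc, hb _ (by omega) (by omega)]; omega
        · rw [Nat.add_assoc α, Nat.add_assoc β, hu _ _ (by omega) (by omega) (by omega)]; omega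
      · have hp : 4 ^ (l+1) = 4 * 4 ^ l := by rw [pow_succ, mul_comm]
        rw [hp, ← Nat.div_div_eq_div_mul] at h1 ⊢
        rw [hp, Nat.mod_mul] at h0
        rw [← Nat.div_div_eq_div_mul]
        have j4 : j % 4 = 0 := by omega
        have h0' : j / 4 % 4 ^ l = 0 := by omega
        obtain ⟨c1, c2⟩ := H1 l (by omega) (i / 4) (by omega) (j / 4) (by omega) h0' h1
        have ej : β + 4 * β' + j = β + 4 * (β' + j / 4) := by omega
        have := Ku (α' + i / 4) (i % 4) (β' + j / 4) (by omega) (by omega) (by omega)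
        rw [show α + (4 * (α' + i / 4) + i % 4) = α + 4 * α' + i by omega] at this
        rw [ej, this]
        exact ⟨c1, c2⟩
    · intro l hl i hi j hj h0 h1
      rcases l with _ | l
      · simp only [pow_zero, Nat.div_one] at *
        constructor
        · rw [Nat.add_assoc, ha _ (by omega) (by omega)]; omega
        · rw [Nat.add_assoc α, Nat.add_assoc β, hw _ _ (by omega) (by omega) (by omega)]; omega
      · have hp : 4 ^ (l+1) = 4 * 4 ^ l := by rw [pow_succ, mul_comm]
        rw [hp, ← Nat.div_div_eq_div_mul] at h1 ⊢
        rw [hp, Nat.mod_mul] at h0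
        rw [← Nat.div_div_eq_div_mul]
        have j4 : i % 4 = 0 := by omega
        have h0' : i / 4 % 4 ^ l = 0 := by omega
        obtain ⟨c1, c2⟩ := H2 l (by omega) (i / 4) (by omega) (j / 4) (by omega) h0' h1
        have ej : α + 4 * α' + i = α + 4 * (α' + i / 4) := by omega
        have := Kw (α' + i / 4) (j % 4) (β' + j / 4) (by omega) (by omega) (by omega)
        rw [show β + (4 * (β' + j / 4) + j % 4) = β + 4 * β' + j by omega] at this
        rw [ej, this]
        exact ⟨c1, c2⟩

end NilCA

namespace NilCA

/-- Status of an auxiliary lane. -/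
inductive Lane (X : Type) where
  | blk : Lane X
  | pre : Lane X
  | act : X → Lane X

/-- The signal carried by a line (structure part and auxiliary lane). -/
structure Sig (X : Type) where
  a : Fin 4
  w : Fin 16
  k : Fin 4
  z : Bool
  aw : Fin 4
  ak : Fin 4
  s : Lane X

def Lane.map {X Y : Type} (f : X → Y) : Lane X → Lane Y
  | .blk => .blk
  | .pre => .pre
  | .act x => .act (f x)

def Sig.map {X Y : Type} (f : X → Y) (h : Sig X) : Sig Y :=
  ⟨h.a, h.w, h.k, h.z, h.aw, h.ak, h.s.map f⟩

/-- Lane update when crossing a line with digit `a` and outgoing counter `c`. -/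
def upd {X : Type} (x0 : X) (a c : ℕ) (s : Lane X) : Lane X :=
  if c = 2 ∨ c = 3 then
    if a = 1 then .pre
    else if a = 2 then (match s with | .pre => .act x0 | s => s)
    else if a = 3 then .blk
    else s
  else s

/-- The row counter advances. -/
def rowInc (w u : ℕ) (z : Bool) : Prop := ¬ (u % 4 = 0 ∧ (w % 4 ≠ 0 ∨ z = true))
/-- The column counter advances. -/
def colInc (w u : ℕ) (z : Bool) : Prop := ¬ (w % 4 = 0 ∧ (u % 4 ≠ 0 ∨ z = false))

instance (w u z) : Decidable (rowInc w u z) := by unfold rowInc; infer_instance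
instance (w u z) : Decidable (colInc w u z) := by unfold colInc; infer_instance

def crossing {X Y : Type} (psi : X → Y → X × Y) : Lane X → Lane Y → Lane X × Lane Y
  | .act x, .act y => (.act (psi x y).1, .act (psi x y).2)
  | s, t => (s, t)

def badLane {X Y : Type} (bad : X → Y → Bool) : Lane X → Lane Y → Prop
  | .act x, .act y => bad x y = true
  | _, _ => False

instance {X Y : Type} (bad : X → Y → Bool) (s t) : Decidable (badLane bad s t) := by
  unfold badLane; split <;> infer_instance

/-- All parameters of the computation layer. -/
structure Comp (X Y : Type) where
  x0 : X
  y0 : Y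
  psi : X → Y → X × Y
  bad : X → Y → Bool

variable {X Y : Type}

def wOut (h : Sig X) (v : Sig Y) : Fin 16 := if rowInc h.w v.w v.z then h.w + 1 else h.w
def uOut (h : Sig X) (v : Sig Y) : Fin 16 := if colInc h.w v.w v.z then v.w + 1 else v.w

/-- Structural checks of a crossing. -/
def structOK (h : Sig X) (v : Sig Y) : Prop :=
  (rowInc h.w v.w v.z → colInc h.w v.w v.z → (h.w : ℕ) % 4 = v.a ∧ (v.w : ℕ) % 4 = h.a) ∧
  (¬ colInc h.w v.w v.z → (h.w : ℕ) ≠ 0 → (v.a : ℕ) = h.w / 4 ∧ (v.w : ℕ) % 4 = h.k) ∧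
  (¬ rowInc h.w v.w v.z → (v.w : ℕ) ≠ 0 → (h.a : ℕ) = v.w / 4 ∧ (h.w : ℕ) % 4 = v.k) ∧
  ((h.aw : ℕ) ≠ 0 → (v.a : ℕ) = h.aw ∧ (uOut h v : ℕ) % 4 = h.ak) ∧
  ((v.aw : ℕ) ≠ 0 → (h.a : ℕ) = v.aw ∧ (wOut h v : ℕ) % 4 = v.ak)

instance (h : Sig X) (v : Sig Y) : Decidable (structOK h v) := by
  unfold structOK; infer_instance

def sMid (x0 : X) (h : Sig X) (v : Sig Y) : Lane X := upd x0 v.a ((uOut h v : ℕ) % 4) h.s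
def tMid (y0 : Y) (h : Sig X) (v : Sig Y) : Lane Y := upd y0 h.a ((wOut h v : ℕ) % 4) v.s

/-- Output of a crossing (ignoring the checks). -/
def outH (C : Comp X Y) (h : Sig X) (v : Sig Y) : Sig X :=
  ⟨h.a, wOut h v, h.k,
    if rowInc h.w v.w v.z ∧ colInc h.w v.w v.z then v.z else decide (rowInc h.w v.w v.z),
    h.aw + 1, h.ak, (crossing C.psi (sMid C.x0 h v) (tMid C.y0 h v)).1⟩
def outV (C : Comp X Y) (h : Sig X) (v : Sig Y) : Sig Y :=
  ⟨v.a, uOut h v, v.k, h.z, v.aw + 1, v.ak,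
    (crossing C.psi (sMid C.x0 h v) (tMid C.y0 h v)).2⟩

def okay (C : Comp X Y) (h : Sig X) (v : Sig Y) : Prop :=
  structOK h v ∧ ¬ badLane C.bad (sMid C.x0 h v) (tMid C.y0 h v)

instance (C : Comp X Y) (h : Sig X) (v : Sig Y) : Decidable (okay C h v) := by
  unfold okay; infer_instance

/-- A square grid of compatible signals. -/
def Grid (C : Comp X Y) (N : ℕ) (H : ℕ → ℕ → Sig X) (V : ℕ → ℕ → Sig Y) : Prop :=
  ∀ i j, i < N → j < N → okay C (H i j) (V i j) ∧
    H i (j+1) = outH C (H i j) (V i j) ∧ V (i+1) j = outV C (H i j) (V i j)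

/-- The array of payloads of the computation layer. -/
def pay (C : Comp X Y) : ℕ → ℕ → X × Y
  | 0, 0 => (C.x0, C.y0)
  | 0, t+1 => ((C.psi (pay C 0 t).1 (pay C 0 t).2).1, C.y0)
  | s+1, 0 => (C.x0, (C.psi (pay C s 0).1 (pay C s 0).2).2)
  | s+1, t+1 => ((C.psi (pay C (s+1) t).1 (pay C (s+1) t).2).1,
      (C.psi (pay C s (t+1)).1 (pay C s (t+1)).2).2)
termination_by s t => s + t

theorem pay_x0 (C : Comp X Y) (s : ℕ) : (pay C s 0).1 = C.x0 := by
  cases s <;> simp [pay]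
theorem pay_y0 (C : Comp X Y) (t : ℕ) : (pay C 0 t).2 = C.y0 := by
  cases t <;> simp [pay]
theorem pay_x (C : Comp X Y) (s t : ℕ) :
    (pay C s (t+1)).1 = (C.psi (pay C s t).1 (pay C s t).2).1 := by
  cases s <;> simp [pay]
theorem pay_y (C : Comp X Y) (s t : ℕ) :
    (pay C (s+1) t).2 = (C.psi (pay C s t).1 (pay C s t).2).2 := by
  cases t <;> simp [pay]

/-- Abstract lane system on the region `[i0,i1) × [j0,j1)`; `s` and `t` are the lane states before
crossing, `ca`, `cc` (digit, counter) data. -/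
structure LaneSys (C : Comp X Y) (i0 i1 j0 j1 : ℕ) (s : ℕ → ℕ → Lane X) (t : ℕ → ℕ → Lane Y) :
    Prop where
  s_step : ∀ i j, i0 ≤ i → i < i1 → j0 ≤ j → j + 1 < j1 → ∀ l, (j+1) % 4 ^ l = 0 →
    (j+1) / 4 ^ l % 4 ≠ 0 →
    s i (j+1) = upd C.x0 ((j+1) / 4 ^ l % 4) ((i / 4 ^ l + 1) % 4) (crossing C.psi (s i j) (t i j)).1
  t_step : ∀ i j, i0 ≤ i → i + 1 < i1 → j0 ≤ j → j < j1 → ∀ l, (i+1) % 4 ^ l = 0 →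
    (i+1) / 4 ^ l % 4 ≠ 0 →
    t (i+1) j = upd C.y0 ((i+1) / 4 ^ l % 4) ((j / 4 ^ l + 1) % 4) (crossing C.psi (s i j) (t i j)).2

end NilCA

namespace NilCA
variable {X Y : Type}

def dig (i l : ℕ) : ℕ := i / 4 ^ l % 4
def side (d : ℕ) : Prop := d = 1 ∨ d = 2
instance (d) : Decidable (side d) := by unfold side; infer_instance

theorem dig_lt (i l : ℕ) : dig i l < 4 := Nat.mod_lt _ (by norm_num)

theorem side_iff (i l : ℕ) :
    ((i / 4 ^ l + 1) % 4 = 2 ∨ (i / 4 ^ l + 1) % 4 = 3) ↔ side (dig i l) := by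
  unfold side dig; omega

/-- The first level at which line `i` is inside a zone. -/
def kap (i l : ℕ) : Prop := side (dig i l) ∧ ∀ l' < l, ¬ side (dig i l')

theorem exists_kap {i l : ℕ} (h : side (dig i l)) : ∃ l' ≤ l, kap i l' := by
  classical
  have hex : ∃ l, side (dig i l) := ⟨l, h⟩
  exact ⟨Nat.find hex, Nat.find_min' hex h, Nat.find_spec hex, fun l' hl => Nat.find_min hex hl⟩

theorem kap_unique {i l l' : ℕ} (h : kap i l) (h' : kap i l') : l = l' := by
  rcases lt_trichotomy l l' with hlt | h1 | hlt
  · exact absurd h.1 (h'.2 l hlt)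
  · exact h1
  · exact absurd h'.1 (h.2 l' hlt)

/-- every positive number has an exact level -/
theorem exists_level (j : ℕ) (hj : 0 < j) : ∃ l, j % 4 ^ l = 0 ∧ dig j l ≠ 0 := by
  induction j using Nat.strong_induction_on with
  | _ j ih =>
    by_cases h : j % 4 = 0
    · obtain ⟨l, h1, h2⟩ := ih (j / 4) (by omega) (by omega)
      refine ⟨l + 1, ?_, ?_⟩
      · rw [pow_succ, mul_comm, Nat.mod_mul, h1]; omega
      · unfold dig at *
        rwa [pow_succ, mul_comm, ← Nat.div_div_eq_div_mul]
    · exact ⟨0, by simp [Nat.mod_one], by simpa [dig] using h⟩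

theorem dig_succ_lt {j l l' : ℕ} (h1 : dig (j+1) l' ≠ 0) (hl : l' < l) :
    dig (j+1) l = dig j l := by
  unfold dig
  rw [Nat.succ_div_of_not_dvd]
  intro hd
  apply h1
  unfold dig
  obtain ⟨e, rfl⟩ : ∃ e, l = l' + 1 + e := ⟨l - (l'+1), by omega⟩
  obtain ⟨c, hc⟩ := hd
  rw [hc, pow_add, pow_succ, show 4 ^ l' * 4 * 4 ^ e * c = 4 ^ l' * (4 * (4 ^ e * c)) by ring,
    Nat.mul_div_cancel_left _ (by positivity)]
  omega

theorem dig_succ_eq {j l : ℕ} (h0 : (j+1) % 4 ^ l = 0) (h1 : dig (j+1) l ≠ 0) :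
    dig (j+1) l = dig j l + 1 := by
  unfold dig at *
  rw [Nat.succ_div_of_dvd (Nat.dvd_of_mod_eq_zero h0)] at *
  omega

theorem dig_succ_gt {j l l' : ℕ} (h0 : (j+1) % 4 ^ l' = 0) (hl : l < l') :
    dig (j+1) l = 0 ∧ dig j l = 3 := by
  obtain ⟨e, rfl⟩ : ∃ e, l' = l + 1 + e := ⟨l' - (l+1), by omega⟩
  have hd := Nat.dvd_of_mod_eq_zero h0
  have hd1 : 4 ^ l ∣ j + 1 := dvd_trans (pow_dvd_pow 4 (by omega)) hd
  have h2 : dig (j+1) l = 0 := by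
    obtain ⟨c, hc⟩ := hd
    unfold dig
    rw [hc, pow_add, pow_succ, show 4 ^ l * 4 * 4 ^ e * c = 4 ^ l * (4 * (4 ^ e * c)) by ring,
      Nat.mul_div_cancel_left _ (by positivity)]
    omega
  refine ⟨h2, ?_⟩
  unfold dig at *
  rw [Nat.succ_div_of_dvd hd1] at h2
  omega

/-- same kind of lane status -/
def SK : Lane X → Lane X → Prop
  | .blk, .blk => True
  | .pre, .pre => True
  | .act _, .act _ => True
  | _, _ => False

theorem SK_crossing1 (psi : X → Y → X × Y) (s : Lane X) (t : Lane Y) :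
    SK s (crossing psi s t).1 := by
  cases s <;> cases t <;> simp [SK, crossing]
theorem SK_crossing2 (psi : X → Y → X × Y) (s : Lane X) (t : Lane Y) :
    SK t (crossing psi s t).2 := by
  cases s <;> cases t <;> simp [SK, crossing]

def isAct : Lane X → Prop
  | .act _ => True
  | _ => False

/-- Lane invariant for line `i` at position `j`. -/
def LInv (i j : ℕ) (s : Lane X) : Prop :=
  (∀ l, kap i l → (dig j l = 1 → s = .pre) ∧ (dig j l = 2 → isAct s) ∧ (dig j l = 3 → s = .blk) ∧
    (dig j l = 0 → ¬ isAct s)) ∧ ((∀ l, ¬ kap i l) → ¬ isAct s)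

theorem LInv_step (x0 : X) {i j l : ℕ} {s s' : Lane X} (h : LInv i j s) (hsk : SK s s')
    (h0 : (j+1) % 4 ^ l = 0) (h1 : (j+1) / 4 ^ l % 4 ≠ 0) :
    LInv i (j+1) (upd x0 ((j+1) / 4 ^ l % 4) ((i / 4 ^ l + 1) % 4) s') := by
  change dig (j+1) l ≠ 0 at h1
  change LInv i (j+1) (upd x0 (dig (j+1) l) ((i / 4 ^ l + 1) % 4) s')
  constructor
  · intro k hk
    have hh := h.1 k hk
    rcases lt_trichotomy l k with hlt | rfl | hgt
    · have := hk.2 l hlt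
      rw [← side_iff] at this
      unfold upd
      rw [if_neg this, dig_succ_lt h1 hlt]
      cases s <;> cases s' <;> simp_all [SK, isAct]
    · have := hk.1
      rw [← side_iff] at this
      unfold upd
      rw [if_pos this]
      have e := dig_succ_eq h0 h1
      have e2 := dig_lt (j+1) l
      have : dig j l = 0 ∨ dig j l = 1 ∨ dig j l = 2 := by omega
      rcases this with h3 | h3 | h3 <;> rw [h3] at e <;> simp only [e] <;> 
        cases s <;> cases s' <;> simp_all [SK, isAct]
    · obtain ⟨e1, e2⟩ := dig_succ_gt h0 hgt
      rw [e1]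
      have := hh.2.2.1 e2
      subst this
      cases s' <;> simp_all [SK]
      unfold upd
      split_ifs <;> simp [isAct]
  · intro hk
    have hh := h.2 hk
    have : ¬ side (dig i l) := fun hs => by
      obtain ⟨l', _, h'⟩ := exists_kap hs
      exact hk l' h'
    rw [← side_iff] at this
    unfold upd
    rw [if_neg this]
    cases s <;> cases s' <;> simp_all [SK, isAct]

variable {C : Comp X Y} {i0 i1 j0 j1 : ℕ} {s : ℕ → ℕ → Lane X} {t : ℕ → ℕ → Lane Y}

theorem LaneSys.rowInv (h : LaneSys C i0 i1 j0 j1 s t)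
    (hb : ∀ i, i0 ≤ i → i < i1 → LInv i j0 (s i j0)) (i : ℕ) (hi : i0 ≤ i) (hi' : i < i1) :
    ∀ j, j0 ≤ j → j < j1 → LInv i j (s i j) := by
  intro j hj
  induction j, hj using Nat.le_induction with
  | base => intro _; exact hb i hi hi'
  | succ j hj ih =>
    intro hlt
    obtain ⟨l, h0, h1⟩ := exists_level (j+1) (by omega)
    rw [h.s_step i j hi hi' hj hlt l h0 h1]
    exact LInv_step _ (ih (by omega)) (SK_crossing1 _ _ _) h0 h1

theorem LaneSys.colInv (h : LaneSys C i0 i1 j0 j1 s t)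
    (hb : ∀ j, j0 ≤ j → j < j1 → LInv j i0 (t i0 j)) (j : ℕ) (hj : j0 ≤ j) (hj' : j < j1) :
    ∀ i, i0 ≤ i → i < i1 → LInv j i (t i j) := by
  intro i hi
  induction i, hi using Nat.le_induction with
  | base => intro _; exact hb j hj hj'
  | succ i hi ih =>
    intro hlt
    obtain ⟨l, h0, h1⟩ := exists_level (i+1) (by omega)
    rw [h.t_step i j hi hlt hj hj' l h0 h1]
    exact LInv_step _ (ih (by omega)) (SK_crossing2 _ _ _) h0 h1

/-- free lines of a zone of level `K` -/
def Free (K y : ℕ) : Prop := ∀ l < K, ¬ side (dig y l)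
instance (K) : DecidablePred (Free K) := fun y => by unfold Free; infer_instance

theorem dig_add {K I y l : ℕ} (hI : I % 4 ^ K = 0) (hl : l < K) : dig (I + y) l = dig y l := by
  obtain ⟨c, rfl⟩ := Nat.dvd_of_mod_eq_zero hI
  obtain ⟨e, rfl⟩ : ∃ e, K = l + 1 + e := ⟨K - (l+1), by omega⟩
  unfold dig
  rw [show 4 ^ (l + 1 + e) * c + y = y + 4 ^ l * (4 * (4 ^ e * c)) by ring,
    Nat.add_mul_div_left _ _ (by positivity)]
  omega

theorem dig_add_eq {K I y : ℕ} (hI : I % 4 ^ K = 0) (hy : y < 4 ^ K) : dig (I + y) K = dig I K := by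
  obtain ⟨c, rfl⟩ := Nat.dvd_of_mod_eq_zero hI
  unfold dig
  rw [Nat.add_comm, Nat.add_mul_div_left _ _ (by positivity), Nat.mul_div_cancel_left _ (by positivity),
    Nat.div_eq_of_lt hy, Nat.zero_add]

theorem free_kap {K I y : ℕ} (hI : I % 4 ^ K = 0) (hI2 : dig I K = 2) (hy : y < 4 ^ K)
    (hf : Free K y) : kap (I + y) K := by
  refine ⟨?_, fun l hl => ?_⟩
  · rw [dig_add_eq hI hy, hI2]; right; rfl
  · rw [dig_add hI hl]; exact hf l hl

/-- A non-free line is not active where it meets a free line. -/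
theorem nonfree_not_act {K I J y x : ℕ} (hI : I % 4 ^ K = 0) (hJ : J % 4 ^ K = 0) 
    (hf : Free K y) (hn : ¬ Free K x) {s : Lane X} (h : LInv (J + x) (I + y) s) : ¬ isAct s := by
  unfold Free at hn
  push Not at hn
  obtain ⟨l, hl, hs⟩ := hn
  rw [← dig_add hJ hl] at hs
  obtain ⟨l', hl', hk⟩ := exists_kap hs
  have h4 := h.1 l' hk
  have h5 := hf l' (by omega)
  rw [← dig_add hI (by omega)] at h5
  have := dig_lt (I + y) l'
  unfold side at h5
  have : dig (I + y) l' = 0 ∨ dig (I+y) l' = 3 := by omega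
  rcases this with h6 | h6
  · exact h4.2.2.2 h6
  · rw [h4.2.2.1 h6]; simp [isAct]

theorem upd_free {K I y x l : ℕ} {x0 : X} {s : Lane X} {J : ℕ} (hI : I % 4 ^ K = 0)
    (hJ : J % 4 ^ K = 0) (hx : x + 1 < 4 ^ K)
    (hf : Free K y) (h0 : (J + x + 1) % 4 ^ l = 0) (h1 : (J + x + 1) / 4 ^ l % 4 ≠ 0) :
    upd x0 ((J + x + 1) / 4 ^ l % 4) (((I + y) / 4 ^ l + 1) % 4) s = s := by
  have hl : l < K := by
    by_contra hl
    have h2 : 4 ^ K ∣ J + x + 1 := dvd_trans (pow_dvd_pow 4 (by omega)) (Nat.dvd_of_mod_eq_zero h0)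
    have h3 : 4 ^ K ∣ x + 1 := by
      rw [Nat.add_assoc] at h2
      exact (Nat.dvd_add_right (Nat.dvd_of_mod_eq_zero hJ)).1 h2
    exact absurd (Nat.le_of_dvd (by omega) h3) (by omega)
  unfold upd
  rw [if_neg]
  rw [side_iff, dig_add hI hl]
  exact hf l hl

theorem upd_start {K I y J : ℕ} {x0 : X} {s s' : Lane X} (hI : I % 4 ^ K = 0) (hI2 : dig I K = 2)
    (hJ : (J + 1) % 4 ^ K = 0) (hJ2 : dig (J+1) K = 2) (hy : y < 4 ^ K) (hf : Free K y)
    (h : LInv (I + y) J s) (hsk : SK s s') :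
    upd x0 ((J+1) / 4 ^ K % 4) (((I + y) / 4 ^ K + 1) % 4) s' = .act x0 := by
  have hk := free_kap hI hI2 hy hf
  have e := dig_succ_eq hJ (by omega)
  have := (h.1 K hk).1 (by omega)
  subst this
  cases s' <;> simp [SK] at hsk
  unfold upd
  have h2 := hk.1
  rw [← side_iff] at h2
  rw [if_pos h2]
  change (J+1) / 4 ^ K % 4 = 2 at hJ2
  simp [hJ2]

/-- The computation performed in a zone. -/
theorem LaneSys.compute (h : LaneSys C i0 i1 j0 j1 s t)
    (hR : ∀ i j, i0 ≤ i → i < i1 → j0 ≤ j → j < j1 → LInv i j (s i j))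
    (hC : ∀ i j, i0 ≤ i → i < i1 → j0 ≤ j → j < j1 → LInv j i (t i j))
    {K I J : ℕ} (hI : I % 4 ^ K = 0) (hI2 : dig I K = 2) (hJ : J % 4 ^ K = 0) (hJ2 : dig J K = 2)
    (hi0 : i0 < I) (hj0 : j0 < J) :
    ∀ n x y, x + y = n → y < 4 ^ K → x < 4 ^ K → I + y < i1 → J + x < j1 →
      (Free K y → s (I + y) (J + x) = .act (pay C (Nat.count (Free K) y) (Nat.count (Free K) x)).1) ∧
      (Free K x → t (I + y) (J + x) = .act (pay C (Nat.count (Free K) y) (Nat.count (Free K) x)).2)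
    := by
  intro n
  induction n using Nat.strong_induction_on with
  | _ n ih =>
  intro x y hn hy hx hiy hjx
  constructor
  · intro hf
    rcases x with _ | x
    · obtain ⟨J', rfl⟩ : ∃ J', J = J' + 1 := ⟨J - 1, by omega⟩
      simp only [Nat.add_zero, Nat.count_zero, pay_x0]
      rw [h.s_step _ _ (by omega) (by omega) (by omega) (by omega) K hJ (by unfold dig at hJ2; omega)]
      exact upd_start hI hI2 hJ hJ2 hy hf (hR _ _ (by omega) (by omega) (by omega) (by omega))
        (SK_crossing1 _ _ _)
    · obtain ⟨l, h0, h1⟩ := exists_level (J + x + 1) (by omega)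
      rw [← Nat.add_assoc, h.s_step _ _ (by omega) (by omega) (by omega) (by omega) l h0 h1,
        upd_free hI hJ hx hf h0 h1]
      obtain ⟨i1, i2⟩ := ih (x + y) (by omega) x y rfl hy (by omega) (by omega) (by omega)
      rw [i1 hf, Nat.count_succ]
      by_cases hfx : Free K x
      · rw [i2 hfx, if_pos hfx, pay_x]; rfl
      · have := nonfree_not_act hI hJ hf hfx (hC (I + y) (J + x) (by omega) (by omega) (by omega) (by omega))
        rw [if_neg hfx]
        cases ht : t (I + y) (J + x) <;> simp_all [isAct, crossing]
  · intro hf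
    rcases y with _ | y
    · obtain ⟨I', rfl⟩ : ∃ I', I = I' + 1 := ⟨I - 1, by omega⟩
      simp only [Nat.add_zero, Nat.count_zero, pay_y0]
      rw [h.t_step _ _ (by omega) (by omega) (by omega) (by omega) K hI (by unfold dig at hI2; omega)]
      exact upd_start hJ hJ2 hI hI2 hx hf (hC _ _ (by omega) (by omega) (by omega) (by omega))
        (SK_crossing2 _ _ _)
    · obtain ⟨l, h0, h1⟩ := exists_level (I + y + 1) (by omega)
      rw [← Nat.add_assoc, h.t_step _ _ (by omega) (by omega) (by omega) (by omega) l h0 h1,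
        upd_free hJ hI hy hf h0 h1]
      obtain ⟨i1, i2⟩ := ih (x + y) (by omega) x y rfl (by omega) hx (by omega) (by omega)
      rw [i2 hf, Nat.count_succ]
      by_cases hfx : Free K y
      · rw [i1 hfx, if_pos hfx, pay_y]; rfl
      · have := nonfree_not_act hJ hI hf hfx (hR (I + y) (J + x) (by omega) (by omega) (by omega) (by omega))
        rw [if_neg hfx]
        cases ht : s (I + y) (J + x) <;> simp_all [isAct, crossing]

theorem count_free (K : ℕ) : K + 1 ≤ Nat.count (Free K) (4 ^ K) := by
  have : ∀ k ≤ K, k + 1 ≤ Nat.count (Free K) (4 ^ k) := by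
    intro k
    induction k with
    | zero =>
      intro _
      have : Free K 0 := fun l _ => by simp [dig, side]
      rw [pow_zero, show (1:ℕ) = 0 + 1 from rfl, Nat.count_succ, if_pos this]; omega
    | succ k ih =>
      intro hk
      have h1 := ih (by omega)
      have hf : Free K (4 ^ (k+1) - 1) := by
        intro l hl
        by_cases hlk : l < k + 1
        · have e : 4 ^ (k+1) - 1 + 1 = 4 ^ (k+1) := Nat.sub_add_cancel (Nat.one_le_pow _ _ (by norm_num))
          have := (dig_succ_gt (j := 4 ^ (k+1) - 1) (l := l) (l' := k+1) (by rw [e]; simp) hlk).2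
          rw [this]; simp [side]
        · have : 4 ^ (k+1) ≤ 4 ^ l := Nat.pow_le_pow_right (by norm_num) (by omega)
          have hp : 0 < 4 ^ (k+1) := by positivity
          unfold dig
          rw [Nat.div_eq_of_lt (by omega)]; simp [side]
      have hp : 4 ^ (k+1) = (4 ^ (k+1) - 1) + 1 := (Nat.sub_add_cancel (Nat.one_le_pow _ _ (by norm_num))).symm
      rw [hp, Nat.count_succ, if_pos hf]
      have : Nat.count (Free K) (4 ^ k) ≤ Nat.count (Free K) (4 ^ (k+1) - 1) := by
        apply Nat.count_monotone
        have : 0 < 4 ^ k := by positivity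
        rw [pow_succ]; omega
      omega
  exact this K le_rfl

theorem exists_free {K s : ℕ} (hs : s ≤ K) : ∃ y < 4 ^ K, Free K y ∧ Nat.count (Free K) y = s := by
  have hc := count_free K
  have key : ∀ n, s < Nat.count (Free K) n → ∃ y < n, Free K y ∧ Nat.count (Free K) y = s := by
    intro n
    induction n with
    | zero => simp
    | succ n ih =>
      intro h
      rw [Nat.count_succ] at h
      by_cases h1 : s < Nat.count (Free K) n
      · obtain ⟨y, a, b⟩ := ih h1
        exact ⟨y, by omega, b⟩
      · by_cases hf : Free K n
        · rw [if_pos hf] at h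
          exact ⟨n, by omega, hf, by omega⟩
        · rw [if_neg hf] at h; omega
  exact key _ (by omega)

end NilCA

namespace NilCA
variable {X Y : Type}

theorem fin16_succ (x : Fin 16) : ((x + 1 : Fin 16) : ℕ) = (x + 1) % 16 := by
  rw [Fin.val_add]; rfl
theorem fin4_succ (x : Fin 4) : ((x + 1 : Fin 4) : ℕ) = (x + 1) % 4 := by
  rw [Fin.val_add]; rfl

variable {C : Comp X Y} {N : ℕ} {H : ℕ → ℕ → Sig X} {V : ℕ → ℕ → Sig Y}

theorem Grid.hconst (g : Grid C N H V) {i : ℕ} (hi : i < N) : ∀ j ≤ N,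
    (H i j).a = (H i 0).a ∧ (H i j).k = (H i 0).k ∧ (H i j).ak = (H i 0).ak ∧
      ((H i j).aw : ℕ) = ((H i 0).aw + j) % 4 := by
  intro j
  induction j with
  | zero => intro _; refine ⟨rfl, rfl, rfl, ?_⟩; rw [Nat.add_zero, Nat.mod_eq_of_lt]; exact Fin.isLt _
  | succ j ih =>
    intro hj
    obtain ⟨h1, h2, h3, h4⟩ := ih (by omega)
    rw [(g i j hi (by omega)).2.1]
    refine ⟨h1, h2, h3, ?_⟩
    simp only [outH, fin4_succ, h4]
    omega

theorem Grid.vconst (g : Grid C N H V) {j : ℕ} (hj : j < N) : ∀ i ≤ N,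
    (V i j).a = (V 0 j).a ∧ (V i j).k = (V 0 j).k ∧ (V i j).ak = (V 0 j).ak ∧
      ((V i j).aw : ℕ) = ((V 0 j).aw + i) % 4 := by
  intro i
  induction i with
  | zero => intro _; refine ⟨rfl, rfl, rfl, ?_⟩; rw [Nat.add_zero, Nat.mod_eq_of_lt]; exact Fin.isLt _
  | succ i ih =>
    intro hi
    obtain ⟨h1, h2, h3, h4⟩ := ih (by omega)
    rw [(g i j (by omega) hj).2.2]
    refine ⟨h1, h2, h3, ?_⟩
    simp only [outV, fin4_succ, h4]
    omega

theorem Grid.wOut (g : Grid C N H V) {i j : ℕ} (hi : i < N) (hj : j < N) :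
    (H i (j+1)).w = NilCA.wOut (H i j) (V i j) := by
  rw [(g i j hi hj).2.1]; rfl
theorem Grid.uOut (g : Grid C N H V) {i j : ℕ} (hi : i < N) (hj : j < N) :
    (V (i+1) j).w = NilCA.uOut (H i j) (V i j) := by
  rw [(g i j hi hj).2.2]; rfl

theorem Grid.arr (g : Grid C N H V) :
    Arr N (fun i => (H i 0).a) (fun j => (V 0 j).a) (fun i j => (H i j).w) (fun i j => (V i j).w)
      (fun i => (H i 0).k) (fun j => (V 0 j).k)
      (fun i j => rowInc (H i j).w (V i j).w (V i j).z)
      (fun i j => colInc (H i j).w (V i j).w (V i j).z) where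
  wlt m n := Fin.isLt _
  ult m n := Fin.isLt _
  pq m n hm hn := by
    unfold rowInc colInc
    cases (V m n).z <;> simp <;> omega
  nq m n hm hn h := by unfold colInc at h; tauto
  np m n hm hn h := by unfold rowInc at h; tauto
  e m n hm hn h1 h2 := by
    have := (g m n hm hn).1.1.1 h1 h2
    rw [(g.hconst hm n hn.le).1, (g.vconst hn m hm.le).1] at this
    refine ⟨?_, ?_, this⟩
    · unfold rowInc colInc at *
      cases hz : (V m n).z <;> simp [hz] at h1 h2 <;> tauto
    · unfold rowInc colInc at *
      cases hz : (V m n).z <;> simp [hz] at h1 h2 <;> tauto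
  wi m n hm hn h := by
    rw [g.wOut hm hn]
    unfold NilCA.wOut
    rw [if_pos h, fin16_succ]
  wk m n hm hn h := by
    rw [g.wOut hm hn]
    unfold NilCA.wOut
    rw [if_neg h]
  ui m n hm hn h := by
    rw [g.uOut hm hn]
    unfold NilCA.uOut
    rw [if_pos h, fin16_succ]
  uk m n hm hn h := by
    rw [g.uOut hm hn]
    unfold NilCA.uOut
    rw [if_neg h]
  cq m n hm hn h1 h2 := by
    have := (g m n hm hn).1.1.2.1 h1 h2
    rwa [(g.hconst hm n hn.le).2.1, (g.vconst hn m hm.le).1] at this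
  cp m n hm hn h1 h2 := by
    have := (g m n hm hn).1.1.2.2.1 h1 h2
    rwa [(g.hconst hm n hn.le).1, (g.vconst hn m hm.le).2.1] at this
  il m hm := by
    refine ⟨(H m 0).aw, (H m 0).ak, fun n hn hne => ?_⟩
    have := (g m n hm hn).1.1.2.2.2.1
    rw [(g.hconst hm n hn.le).2.2.1, (g.hconst hm n hn.le).2.2.2, (g.vconst hn m hm.le).1] at this
    rw [g.uOut hm hn]
    rw [Nat.add_comm] at hne
    rw [Nat.add_comm n]
    exact this hne
  jl n hn := by
    refine ⟨(V 0 n).aw, (V 0 n).ak, fun m hm hne => ?_⟩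
    have := (g m n hm hn).1.1.2.2.2.2
    rw [(g.vconst hn m hm.le).2.2.1, (g.vconst hn m hm.le).2.2.2, (g.hconst hm n hn.le).1] at this
    rw [g.wOut hm hn]
    rw [Nat.add_comm] at hne
    rw [Nat.add_comm m]
    exact this hne

theorem dig_pow_self (K : ℕ) : dig (4 ^ K) K = 1 := by
  unfold dig; rw [Nat.div_self (by positivity)]
theorem dig_pow_lt {K l : ℕ} (h : l < K) : dig (4 ^ K) l = 0 := by
  have := dig_add (K := K) (I := 4 ^ K) (y := 0) (Nat.mod_self _) h
  rw [Nat.add_zero] at this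
  rw [this]; simp [dig]

theorem LInv_base {i K : ℕ} (hi : 4 ^ K ≤ i) (hi' : i < 3 * 4 ^ K) :
    LInv i (4 ^ K) (Lane.pre : Lane X) := by
  refine ⟨fun l hl => ?_, fun _ => by simp [isAct]⟩
  have hside : side (dig i K) := by
    have h1 : 1 ≤ i / 4 ^ K := (Nat.one_le_div_iff (by positivity)).2 hi
    have h2 : i / 4 ^ K < 3 := (Nat.div_lt_iff_lt_mul (by positivity)).2 hi'
    unfold side dig; omega
  have hl2 : l ≤ K := by
    by_contra h
    exact hl.2 K (by omega) hside
  rcases Nat.lt_or_ge l K with h | h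
  · rw [dig_pow_lt h]; simp [isAct]
  · obtain rfl : l = K := by omega
    rw [dig_pow_self]; simp

/-- Direction A: large grids contain computations. -/
theorem grid_pay (C : Comp X Y) (K : ℕ) : ∃ N0, ∀ N H V, Grid C N H V → N0 ≤ N →
    ∀ s t, s ≤ K → t ≤ K → C.bad (pay C s t).1 (pay C s t).2 = false := by
  obtain ⟨N0, hN0⟩ := force (K+1) (3 * 4 ^ K)
  refine ⟨N0, fun N H V g hN => ?_⟩
  obtain ⟨α, β, hα, hβ, F1, F2⟩ := hN0 _ _ _ _ _ _ _ _ _ g.arr hN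
  have hp : 0 < 4 ^ K := by positivity
  have lev : ∀ j l, j < 3 * 4 ^ K → j / 4 ^ l % 4 ≠ 0 → l < K + 1 := by
    intro j l hj h
    by_contra hl
    have h1 : 4 ^ (K+1) ≤ 4 ^ l := Nat.pow_le_pow_right (by norm_num) (by omega)
    rw [pow_succ] at h1
    rw [Nat.div_eq_of_lt (by omega)] at h
    simp at h
  have S : ∀ i j, i < 3 * 4 ^ K → j < 3 * 4 ^ K → ∀ l, j % 4 ^ l = 0 → j / 4 ^ l % 4 ≠ 0 →
      sMid C.x0 (H (α + i) (β + j)) (V (α + i) (β + j)) =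
        upd C.x0 (j / 4 ^ l % 4) ((i / 4 ^ l + 1) % 4) (H (α + i) (β + j)).s := by
    intro i j hi hj l h0 h1
    obtain ⟨e1, e2⟩ := F1 l (lev j l hj h1) i hi j hj h0 h1
    unfold sMid
    rw [← g.uOut (by omega) (by omega), e2, (g.vconst (by omega) (α + i) (by omega)).1, e1]
  have T : ∀ i j, i < 3 * 4 ^ K → j < 3 * 4 ^ K → ∀ l, i % 4 ^ l = 0 → i / 4 ^ l % 4 ≠ 0 →
      tMid C.y0 (H (α + i) (β + j)) (V (α + i) (β + j)) =
        upd C.y0 (i / 4 ^ l % 4) ((j / 4 ^ l + 1) % 4) (V (α + i) (β + j)).s := by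
    intro i j hi hj l h0 h1
    obtain ⟨e1, e2⟩ := F2 l (lev i l hi h1) i hi j hj h0 h1
    unfold tMid
    rw [← g.wOut (by omega) (by omega), e2, (g.hconst (by omega) (β + j) (by omega)).1, e1]
  have LS : LaneSys C (4 ^ K) (3 * 4 ^ K) (4 ^ K) (3 * 4 ^ K)
      (fun i j => sMid C.x0 (H (α + i) (β + j)) (V (α + i) (β + j)))
      (fun i j => tMid C.y0 (H (α + i) (β + j)) (V (α + i) (β + j))) := by
    constructor
    · intro i j hi hi' hj hj' l h0 h1
      rw [S i (j+1) hi' hj' l h0 h1, ← Nat.add_assoc, (g (α + i) (β + j) (by omega) (by omega)).2.1]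
      rfl
    · intro i j hi hi' hj hj' l h0 h1
      rw [T (i+1) j hi' hj' l h0 h1, ← Nat.add_assoc, (g (α + i) (β + j) (by omega) (by omega)).2.2]
      rfl
  have one : 4 ^ K / 4 ^ K % 4 = 1 := dig_pow_self K
  have updpre : ∀ {Z : Type} (z0 : Z) i (s : Lane Z), 4 ^ K ≤ i → i < 3 * 4 ^ K →
      upd z0 1 ((i / 4 ^ K + 1) % 4) s = .pre := by
    intro Z z0 i s hi hi'
    have h1 : 1 ≤ i / 4 ^ K := (Nat.one_le_div_iff (by positivity)).2 hi
    have h2 : i / 4 ^ K < 3 := (Nat.div_lt_iff_lt_mul (by positivity)).2 hi'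
    unfold upd
    rw [if_pos (by omega)]; simp
  have BR := LS.rowInv (by
    intro i hi hi'
    rw [S i (4 ^ K) hi' (by omega) K (Nat.mod_self _) (by omega), one, updpre _ _ _ hi hi']
    exact LInv_base hi hi')
  have BC := LS.colInv (by
    intro i hi hi'
    rw [T (4 ^ K) i (by omega) hi' K (Nat.mod_self _) (by omega), one, updpre _ _ _ hi hi']
    exact LInv_base hi hi')
  have two : dig (2 * 4 ^ K) K = 2 := by
    unfold dig; rw [Nat.mul_div_cancel _ hp]
  have CP := LS.compute (K := K) (I := 2 * 4 ^ K) (J := 2 * 4 ^ K)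
    (fun i j a1 a2 a3 a4 => BR i a1 a2 j a3 a4) (fun i j a1 a2 a3 a4 => BC j a3 a4 i a1 a2)
    (by simp) two (by simp) two (by omega) (by omega)
  intro s t hs ht
  obtain ⟨y, hy, fy, rfl⟩ := exists_free hs
  obtain ⟨x, hx, fx, rfl⟩ := exists_free ht
  obtain ⟨c1, c2⟩ := CP _ x y rfl hy hx (by omega) (by omega)
  have := (g (α + (2 * 4 ^ K + y)) (β + (2 * 4 ^ K + x)) (by omega) (by omega)).1.2
  rw [c1 fy, c2 fx] at this
  simpa [badLane] using this

end NilCA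

namespace NilCA
variable {X Y : Type}

noncomputable def lv (m : ℕ) : ℕ := multiplicity 4 m

theorem pow_dvd_lv {m l : ℕ} (hm : 0 < m) : 4 ^ l ∣ m ↔ l ≤ lv m :=
  FiniteMultiplicity.pow_dvd_iff_le_multiplicity (Nat.finiteMultiplicity_iff.2 ⟨by norm_num, hm⟩)

theorem mod4_iff {n k : ℕ} (hd : 4 ^ k ∣ n) : n / 4 ^ k % 4 = 0 ↔ 4 ^ (k+1) ∣ n := by
  obtain ⟨c, rfl⟩ := hd
  rw [Nat.mul_div_cancel_left _ (by positivity), pow_succ,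
    Nat.mul_dvd_mul_iff_left (by positivity), Nat.dvd_iff_mod_eq_zero]

theorem lv_dig {n : ℕ} (hn : 0 < n) : n / 4 ^ lv n % 4 ≠ 0 := by
  rw [Ne, mod4_iff ((pow_dvd_lv hn).2 le_rfl), pow_dvd_lv hn]; omega

theorem lv_eq {n l : ℕ} (h0 : n % 4 ^ l = 0) (h1 : n / 4 ^ l % 4 ≠ 0) : lv n = l := by
  have hn : 0 < n := by
    rcases Nat.eq_zero_or_pos n with rfl | h
    · simp at h1
    · exact h
  have hd := Nat.dvd_of_mod_eq_zero h0
  rw [Ne, mod4_iff hd, pow_dvd_lv hn] at h1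
  rw [pow_dvd_lv hn] at hd
  omega

/-- explicit counter -/
noncomputable def cW (m n : ℕ) : ℕ := ((n - 1) / 4 ^ lv m + 1) % 16

theorem cdiv_dvd {n k : ℕ} (hn : 0 < n) (h : 4 ^ k ∣ n) : (n-1) / 4 ^ k + 1 = n / 4 ^ k := by
  obtain ⟨m, rfl⟩ : ∃ m, n = m + 1 := ⟨n - 1, by omega⟩
  rw [Nat.succ_div_of_dvd h]; rfl
theorem cdiv_ndvd {n k : ℕ} (hn : 0 < n) (h : ¬ 4 ^ k ∣ n) : (n-1) / 4 ^ k = n / 4 ^ k := by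
  obtain ⟨m, rfl⟩ : ∃ m, n = m + 1 := ⟨n - 1, by omega⟩
  rw [Nat.succ_div_of_not_dvd h]; rfl

/-- explicit diagonal signal -/
def zz (m n : ℕ) : Prop := ∃ t, lv (n + t) < lv (m + t) ∧ ∀ s < t, lv (m + s) = lv (n + s)

theorem zz_gt {m n : ℕ} (h : lv n < lv m) : zz m n := ⟨0, by simpa using h, by simp⟩
theorem zz_lt {m n : ℕ} (h : lv m < lv n) : ¬ zz m n := by
  rintro ⟨t, h1, h2⟩
  rcases t with _ | t
  · simp at h1; omega
  · have := h2 0 (by omega)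
    simp at this; omega
theorem zz_eq {m n : ℕ} (h : lv m = lv n) : zz (m+1) (n+1) ↔ zz m n := by
  constructor
  · rintro ⟨t, h1, h2⟩
    refine ⟨t + 1, by rwa [← Nat.add_assoc, ← Nat.add_assoc, Nat.add_right_comm, Nat.add_right_comm m], ?_⟩
    intro s hs
    rcases s with _ | s
    · simpa using h
    · have := h2 s (by omega)
      rwa [← Nat.add_assoc, ← Nat.add_assoc, Nat.add_right_comm, Nat.add_right_comm n]
  · rintro ⟨t, h1, h2⟩
    rcases t with _ | t
    · simp at h1; omega
    · refine ⟨t, by rwa [← Nat.add_assoc, ← Nat.add_assoc, Nat.add_right_comm, Nat.add_right_comm m] at h1, ?_⟩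
      intro s hs
      have := h2 (s+1) (by omega)
      rwa [← Nat.add_assoc, ← Nat.add_assoc, Nat.add_right_comm, Nat.add_right_comm n] at this

/-- alternation along diagonals -/
theorem diag_alt {m n : ℕ} (hn : 0 < n) (hm : 0 < m) (h : lv n < lv m) :
    ∃ t, lv (m + 1 + t) < lv (n + 1 + t) ∧ ∀ s < t, lv (m + 1 + s) = lv (n + 1 + s) := by
  obtain ⟨k, hk⟩ : ∃ k, k = lv n := ⟨_, rfl⟩
  have hdn : 4 ^ k ∣ n := (pow_dvd_lv hn).2 (by omega)
  have hdm : 4 ^ (k+1) ∣ m := (pow_dvd_lv hm).2 (by omega)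
  have hdig : n / 4 ^ k % 4 ≠ 0 := by rw [hk]; exact lv_dig hn
  obtain ⟨c, rfl⟩ := hdn
  obtain ⟨e, rfl⟩ := hdm
  have hp : 0 < 4 ^ k := by positivity
  rw [Nat.mul_div_cancel_left _ hp] at hdig
  have hlt : 0 < (4 - c % 4) * 4 ^ k := Nat.mul_pos (by omega) hp
  have key : ∀ d, 0 < d → d < 4 → lv (4 ^ (k+1) * e + d * 4 ^ k) = k := by
    intro d h0 h1
    have : 4 ^ (k+1) * e + d * 4 ^ k = 4 ^ k * (4 * e + d) := by ring
    apply lv_eq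
    · rw [this]; simp
    · rw [this, Nat.mul_div_cancel_left _ hp]; omega
  have small : ∀ s, 0 < s → ¬ 4 ^ k ∣ s → ∀ q, lv (4 ^ k * q + s) = lv s := by
    intro s hs hnd q
    obtain ⟨l, hl⟩ : ∃ l, l = lv s := ⟨_, rfl⟩
    have hlk : l < k := by
      rw [pow_dvd_lv hs] at hnd; omega
    rw [← hl]
    have h1 : dig (4 ^ k * q + s) l = dig s l := dig_add (by simp) hlk
    apply lv_eq
    · apply Nat.mod_eq_zero_of_dvd
      exact dvd_add (dvd_mul_of_dvd_left (pow_dvd_pow 4 hlk.le) _) ((pow_dvd_lv hs).2 hl.le)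
    · unfold dig at h1
      rw [h1, hl]; exact lv_dig hs
  refine ⟨(4 - c % 4) * 4 ^ k - 1, ?_, ?_⟩
  · rw [show 4 ^ (k+1) * e + 1 + ((4 - c % 4) * 4 ^ k - 1) = 4 ^ (k+1) * e + (4 - c % 4) * 4 ^ k by omega,
      show 4 ^ k * c + 1 + ((4 - c % 4) * 4 ^ k - 1) = 4 ^ k * c + (4 - c % 4) * 4 ^ k by omega,
      key _ (by omega) (by omega)]
    have e1 : 4 ^ k * c + (4 - c % 4) * 4 ^ k = 4 ^ (k+1) * ((c + (4 - c % 4)) / 4) := by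
      have : c + (4 - c % 4) = 4 * ((c + (4 - c % 4)) / 4) := by omega
      rw [pow_succ, Nat.mul_assoc, ← this]; ring
    have : k + 1 ≤ lv (4 ^ k * c + (4 - c % 4) * 4 ^ k) := by
      rw [← pow_dvd_lv (by omega), e1]
      exact dvd_mul_right _ _
    omega
  · intro s hs
    rw [Nat.add_assoc, Nat.add_assoc, Nat.add_comm 1 s]
    by_cases hd : 4 ^ k ∣ s + 1
    · obtain ⟨d, hd⟩ := hd
      rw [hd, Nat.mul_comm _ d]
      have hd0 : 0 < d := by
        rcases Nat.eq_zero_or_pos d with rfl | h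
        · simp at hd
        · exact h
      have hd1 : d < 4 - c % 4 := by
        have : d * 4 ^ k < (4 - c % 4) * 4 ^ k := by rw [Nat.mul_comm d]; omega
        exact lt_of_mul_lt_mul_right this (Nat.zero_le _)
      rw [key d hd0 (by omega)]
      symm
      have : 4 ^ k * c + d * 4 ^ k = 4 ^ k * (c + d) := by ring
      apply lv_eq
      · rw [this]; simp
      · rw [this, Nat.mul_div_cancel_left _ hp]; omega
    · have s1 := small (s+1) (by omega) hd c
      have s2 := small (s+1) (by omega) hd (4 * e)
      rw [← Nat.mul_assoc, ← pow_succ] at s2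
      rw [s1, s2]

theorem zz_after_gt {m n : ℕ} (hn : 0 < n) (hm : 0 < m) (h : lv n < lv m) : ¬ zz (m+1) (n+1) := by
  obtain ⟨t, h1, h2⟩ := diag_alt hn hm h
  rintro ⟨t', h1', h2'⟩
  rcases lt_trichotomy t t' with hh | rfl | hh
  · have := h2' t hh; omega
  · omega
  · have := h2 t' hh; omega
theorem zz_after_lt {m n : ℕ} (hn : 0 < n) (hm : 0 < m) (h : lv m < lv n) : zz (m+1) (n+1) := by
  obtain ⟨t, h1, h2⟩ := diag_alt hm hn h
  exact ⟨t, h1, fun s hs => (h2 s hs).symm⟩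


theorem cW_mod_le {m n : ℕ} (_hm : 0 < m) (hn : 0 < n) (h : lv m ≤ lv n) : cW m n = n / 4 ^ lv m % 16 := by
  unfold cW
  rw [cdiv_dvd hn ((pow_dvd_lv hn).2 h)]

theorem cW_lt {m n : ℕ} (hm : 0 < m) (hn : 0 < n) (h : lv m < lv n) : cW m n % 4 = 0 := by
  rw [cW_mod_le hm hn h.le]
  have := (mod4_iff (k := lv m) ((pow_dvd_lv hn).2 h.le)).2 ((pow_dvd_lv hn).2 h)
  omega

theorem cW_eq {m n : ℕ} (hm : 0 < m) (hn : 0 < n) (h : lv m = lv n) : cW m n % 4 ≠ 0 ∧ cW m n % 4 = n / 4 ^ lv n % 4 := by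
  rw [cW_mod_le hm hn h.le]
  have := lv_dig hn
  rw [h]; omega

open Classical in
theorem rowInc_iff {m n : ℕ} (hm : 0 < m) (hn : 0 < n) : rowInc (cW m n) (cW n m) (decide (zz m n)) ↔ lv m ≤ lv n := by
  rcases lt_trichotomy (lv m) (lv n) with h | h | h
  · have := cW_lt hm hn h
    have := zz_lt h
    unfold rowInc; simp [*]; omega
  · have := (cW_eq hm hn h).1
    have := (cW_eq hn hm h.symm).1
    unfold rowInc; simp [*]
  · have := cW_lt hn hm h
    have := zz_gt h
    unfold rowInc; simp [*]

open Classical in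
theorem colInc_iff {m n : ℕ} (hm : 0 < m) (hn : 0 < n) : colInc (cW m n) (cW n m) (decide (zz m n)) ↔ lv n ≤ lv m := by
  rcases lt_trichotomy (lv m) (lv n) with h | h | h
  · have := cW_lt hm hn h
    have := zz_lt h
    unfold colInc; simp [*]
  · have := (cW_eq hm hn h).1
    have := (cW_eq hn hm h.symm).1
    unfold colInc; simp [*]
  · have := cW_lt hn hm h
    have := zz_gt h
    unfold colInc; simp [*]; omega

theorem cW_succ {m n : ℕ} (hm : 0 < m) (hn : 0 < n) : cW m (n+1) = if lv m ≤ lv n then (cW m n + 1) % 16 else cW m n := by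
  split_ifs with h
  · rw [cW_mod_le hm hn h]
    unfold cW
    simp
  · unfold cW
    rw [← pow_dvd_lv hn] at h
    rw [cdiv_ndvd hn h]; simp

/-- synchronisation check -/
theorem cW_sync {m n : ℕ} (hm : 0 < m) (hn : 0 < n) (h : lv m < lv n) (h0 : cW m n ≠ 0) :
    n / 4 ^ lv n % 4 = cW m n / 4 ∧ cW n m % 4 = ((m - 1) / 4 ^ (lv m + 1) + 1) % 4 := by
  have h4 := cW_lt hm hn h
  rw [cW_mod_le hm hn h.le] at *
  have e : n / 4 ^ lv m / 4 = n / 4 ^ (lv m + 1) := by rw [pow_succ, Nat.div_div_eq_div_mul]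
  have hl : lv n = lv m + 1 := by
    apply lv_eq
    · exact Nat.mod_eq_zero_of_dvd ((pow_dvd_lv hn).2 h)
    · rw [← e]; omega
  rw [hl, ← e]
  refine ⟨by omega, ?_⟩
  unfold cW
  rw [hl]; omega

end NilCA

namespace NilCA
variable {X Y : Type}

/-- Two dimensional recursion. -/
def rec2 {A B : Type} (a0 : A) (b0 : B) (f : ℕ → ℕ → A × B → A × B) : ℕ → ℕ → A × B
  | 0, 0 => (a0, b0)
  | 0, t+1 => ((f 0 t (rec2 a0 b0 f 0 t)).1, b0)
  | s+1, 0 => (a0, (f s 0 (rec2 a0 b0 f s 0)).2)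
  | s+1, t+1 => ((f (s+1) t (rec2 a0 b0 f (s+1) t)).1, (f s (t+1) (rec2 a0 b0 f s (t+1))).2)
termination_by s t => s + t

section
variable {A B : Type} (a0 : A) (b0 : B) (f : ℕ → ℕ → A × B → A × B)
theorem rec2_a0 (s : ℕ) : (rec2 a0 b0 f s 0).1 = a0 := by cases s <;> simp [rec2]
theorem rec2_b0 (t : ℕ) : (rec2 a0 b0 f 0 t).2 = b0 := by cases t <;> simp [rec2]
theorem rec2_a (s t : ℕ) : (rec2 a0 b0 f s (t+1)).1 = (f s t (rec2 a0 b0 f s t)).1 := by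
  cases s <;> simp [rec2]
theorem rec2_b (s t : ℕ) : (rec2 a0 b0 f (s+1) t).2 = (f s t (rec2 a0 b0 f s t)).2 := by
  cases t <;> simp [rec2]
end

noncomputable def midf (C : Comp X Y) (i j : ℕ) (p : Lane X × Lane Y) : Lane X × Lane Y :=
  (upd C.x0 ((j+1) / 4 ^ lv (j+1) % 4) (((i+1) / 4 ^ lv (j+1) + 1) % 4) p.1,
    upd C.y0 ((i+1) / 4 ^ lv (i+1) % 4) (((j+1) / 4 ^ lv (i+1) + 1) % 4) p.2)

/-- lane states before crossing `(i+1, j+1)` -/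
noncomputable def lanes (C : Comp X Y) : ℕ → ℕ → Lane X × Lane Y :=
  rec2 .blk .blk fun i j p => crossing C.psi (midf C i j p).1 (midf C i j p).2

noncomputable def midL (C : Comp X Y) (i j : ℕ) : Lane X × Lane Y := midf C i j (lanes C i j)

theorem laneSys_explicit (C : Comp X Y) (M : ℕ) :
    LaneSys C 1 M 1 M (fun i j => (midL C (i-1) (j-1)).1) (fun i j => (midL C (i-1) (j-1)).2) := by
  constructor
  · intro i j hi hi' hj hj' l h0 h1
    obtain ⟨i, rfl⟩ : ∃ k, i = k + 1 := ⟨i - 1, by omega⟩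
    obtain ⟨j, rfl⟩ : ∃ k, j = k + 1 := ⟨j - 1, by omega⟩
    simp only [Nat.add_sub_cancel]
    conv_lhs => unfold midL midf
    simp only [lv_eq h0 h1]
    conv_lhs => unfold lanes
    rw [rec2_a]
    rfl
  · intro i j hi hi' hj hj' l h0 h1
    obtain ⟨i, rfl⟩ : ∃ k, i = k + 1 := ⟨i - 1, by omega⟩
    obtain ⟨j, rfl⟩ : ∃ k, j = k + 1 := ⟨j - 1, by omega⟩
    simp only [Nat.add_sub_cancel]
    conv_lhs => unfold midL midf
    simp only [lv_eq h0 h1]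
    conv_lhs => unfold lanes
    rw [rec2_b]
    rfl

theorem lv_one : lv 1 = 0 := lv_eq (by simp) (by simp)

theorem dig_one {l : ℕ} (h : l ≠ 0) : dig 1 l = 0 := by
  unfold dig
  rw [Nat.div_eq_of_lt (Nat.one_lt_pow h (by norm_num))]

theorem LInv_one (x0 : X) (i : ℕ) : LInv i 1 (upd x0 1 ((i + 1) % 4) .blk) := by
  constructor
  · intro l hl
    rcases Nat.eq_zero_or_pos l with rfl | h
    · have := hl.1
      rw [← side_iff] at this
      simp only [pow_zero, Nat.div_one] at this
      unfold upd
      rw [if_pos this]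
      simp [dig]
    · rw [dig_one (by omega)]
      unfold upd
      split_ifs <;> simp [isAct]
  · intro _
    unfold upd
    split_ifs <;> simp [isAct]

theorem midL_not_bad (C : Comp X Y) (hC : ∀ s t, C.bad (pay C s t).1 (pay C s t).2 = false)
    (i j : ℕ) : ¬ badLane C.bad (midL C i j).1 (midL C i j).2 := by
  have LS := laneSys_explicit C (i + j + 2)
  have BR := LS.rowInv (by
    intro m hm hm'
    obtain ⟨m, rfl⟩ : ∃ k, m = k + 1 := ⟨m - 1, by omega⟩
    have : (midL C (m + 1 - 1) (1 - 1)).1 = upd C.x0 1 ((m + 1 + 1) % 4) .blk := by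
      simp only [Nat.add_sub_cancel, Nat.sub_self]
      unfold midL midf lanes
      simp only [rec2_a0, Nat.zero_add, lv_one]
      simp
    rw [this]
    exact LInv_one _ _)
  have BC := LS.colInv (by
    intro m hm hm'
    obtain ⟨m, rfl⟩ : ∃ k, m = k + 1 := ⟨m - 1, by omega⟩
    have : (midL C (1 - 1) (m + 1 - 1)).2 = upd C.y0 1 ((m + 1 + 1) % 4) .blk := by
      simp only [Nat.add_sub_cancel, Nat.sub_self]
      unfold midL midf lanes
      simp only [rec2_b0, Nat.zero_add, lv_one]
      simp
    rw [this]
    exact LInv_one _ _)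
  have r := BR (i+1) (by omega) (by omega) (j+1) (by omega) (by omega)
  have c := BC (j+1) (by omega) (by omega) (i+1) (by omega) (by omega)
  simp only [Nat.add_sub_cancel] at r c
  intro hbad
  have actr : isAct (midL C i j).1 := by
    revert hbad
    cases (midL C i j).1 <;> cases (midL C i j).2 <;> simp [badLane, isAct]
  have actc : isAct (midL C i j).2 := by
    revert hbad
    cases (midL C i j).1 <;> cases (midL C i j).2 <;> simp [badLane, isAct]
  have aux : ∀ {Z : Type} {m n : ℕ} {s : Lane Z}, LInv m n s → isAct s → ∃ l, kap m l ∧ dig n l = 2 := by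
    intro Z m n s h ha
    by_contra hcon
    push Not at hcon
    by_cases hk : ∃ l, kap m l
    · obtain ⟨l, hl⟩ := hk
      have h3 := hcon l hl
      have h4 := dig_lt n l
      have h5 := h.1 l hl
      have : dig n l = 0 ∨ dig n l = 1 ∨ dig n l = 3 := by omega
      rcases this with h6 | h6 | h6
      · exact h5.2.2.2 h6 ha
      · rw [h5.1 h6] at ha; exact ha
      · rw [h5.2.2.1 h6] at ha; exact ha
    · push Not at hk
      exact h.2 hk ha
  obtain ⟨k1, a1, a2⟩ := aux r actr
  obtain ⟨k2, b1, b2⟩ := aux c actc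
  have hk : k1 = k2 := by
    rcases lt_trichotomy k1 k2 with h | h | h
    · exact absurd (Or.inr a2) (b1.2 k1 h)
    · exact h
    · exact absurd (Or.inr b2) (a1.2 k2 h)
  subst hk
  have hp : 0 < 4 ^ k1 := by positivity
  have spl : ∀ m, 4 ^ k1 * (m / 4 ^ k1) + m % 4 ^ k1 = m := fun m => Nat.div_add_mod _ _
  have dg : ∀ m, dig (4 ^ k1 * (m / 4 ^ k1)) k1 = dig m k1 := by
    intro m; unfold dig; rw [Nat.mul_div_cancel_left _ hp]
  have big : ∀ m, dig m k1 = 2 → 1 < 4 ^ k1 * (m / 4 ^ k1) := by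
    intro m h
    have : 2 ≤ m / 4 ^ k1 := by unfold dig at h; have := Nat.mod_le (m / 4 ^ k1) 4; rw [h] at this; exact this
    nlinarith
  have fr : ∀ m, kap m k1 → Free k1 (m % 4 ^ k1) := by
    intro m h l hl
    have := h.2 l hl
    rwa [← spl m, dig_add (by simp) hl] at this
  have CP := LS.compute (K := k1) (I := 4 ^ k1 * ((i+1) / 4 ^ k1)) (J := 4 ^ k1 * ((j+1) / 4 ^ k1))
    (fun i j a1 a2 a3 a4 => BR i a1 a2 j a3 a4) (fun i j a1 a2 a3 a4 => BC j a3 a4 i a1 a2)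
    (by simp) (by rw [dg, b2]) (by simp) (by rw [dg, a2]) (big _ b2) (big _ a2)
  obtain ⟨c1, c2⟩ := CP _ ((j+1) % 4 ^ k1) ((i+1) % 4 ^ k1) rfl (Nat.mod_lt _ hp) (Nat.mod_lt _ hp)
    (by rw [spl]; omega) (by rw [spl]; omega)
  simp only [spl, Nat.add_sub_cancel] at c1 c2
  rw [c1 (fr _ a1), c2 (fr _ b1)] at hbad
  unfold badLane at hbad
  simp only [hC] at hbad
  exact absurd hbad (by simp)

open Classical in
/-- explicit signal of line `m` before crossing line `n`. -/
noncomputable def exSig {Z : Type} (m n : ℕ) (z : Prop) (s : Lane Z) : Sig Z where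
  a := ⟨m / 4 ^ lv m % 4, Nat.mod_lt _ (by norm_num)⟩
  w := ⟨cW m n, Nat.mod_lt _ (by norm_num)⟩
  k := ⟨((m - 1) / 4 ^ (lv m + 1) + 1) % 4, Nat.mod_lt _ (by norm_num)⟩
  z := decide z
  aw := ⟨n % 4, Nat.mod_lt _ (by norm_num)⟩
  ak := ⟨(m + 1) % 4, Nat.mod_lt _ (by norm_num)⟩
  s := s

noncomputable def exH (C : Comp X Y) (i j : ℕ) : Sig X :=
  exSig (i+1) (j+1) (zz (i+2) (j+1)) (lanes C i j).1
noncomputable def exV (C : Comp X Y) (i j : ℕ) : Sig Y :=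
  exSig (j+1) (i+1) (zz (i+1) (j+1)) (lanes C i j).2

theorem ex_wOut (C : Comp X Y) (i j : ℕ) : (wOut (exH C i j) (exV C i j) : ℕ) = cW (i+1) (j+2) := by
  have h := cW_succ (m := i+1) (n := j+1) (by omega) (by omega)
  rw [h]
  have h2 := rowInc_iff (m := i+1) (n := j+1) (by omega) (by omega)
  unfold wOut
  simp only [exH, exV, exSig]
  simp only [h2]
  split_ifs
  · rw [fin16_succ]
  · rfl

theorem ex_uOut (C : Comp X Y) (i j : ℕ) : (uOut (exH C i j) (exV C i j) : ℕ) = cW (j+1) (i+2) := by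
  have h := cW_succ (m := j+1) (n := i+1) (by omega) (by omega)
  rw [h]
  have h2 := colInc_iff (m := i+1) (n := j+1) (by omega) (by omega)
  unfold uOut
  simp only [exH, exV, exSig]
  simp only [h2]
  split_ifs
  · rw [fin16_succ]
  · rfl

theorem cW_mod4 (m n : ℕ) : cW m (n+1) % 4 = (n / 4 ^ lv m + 1) % 4 := by
  unfold cW; simp only [Nat.add_sub_cancel]; omega

theorem ex_sMid (C : Comp X Y) (i j : ℕ) : sMid C.x0 (exH C i j) (exV C i j) = (midL C i j).1 := by
  unfold sMid
  rw [ex_uOut, cW_mod4]; rfl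
theorem ex_tMid (C : Comp X Y) (i j : ℕ) : tMid C.y0 (exH C i j) (exV C i j) = (midL C i j).2 := by
  unfold tMid
  rw [ex_wOut, cW_mod4]; rfl

theorem lv_zero_of {n : ℕ} (h : n % 4 ≠ 0) : lv n = 0 := lv_eq (by simp [Nat.mod_one]) (by simpa using h)

/-- Direction B: an explicit infinite grid. -/
theorem exGrid (C : Comp X Y) (hC : ∀ s t, C.bad (pay C s t).1 (pay C s t).2 = false) (N : ℕ) :
    Grid C N (exH C) (exV C) := by
  intro i j _ _
  have hR := rowInc_iff (m := i+1) (n := j+1) (by omega) (by omega)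
  have hQ := colInc_iff (m := i+1) (n := j+1) (by omega) (by omega)
  refine ⟨⟨⟨?_, ?_, ?_, ?_, ?_⟩, ?_⟩, ?_, ?_⟩
  · simp only [exH, exV, exSig, hR, hQ]
    intro h1 h2
    have h := le_antisymm h1 h2
    exact ⟨(cW_eq (by omega) (by omega) h).2, (cW_eq (by omega) (by omega) h.symm).2⟩
  · simp only [exH, exV, exSig, hQ, not_le]
    intro h1 h2
    exact cW_sync (by omega) (by omega) h1 h2
  · simp only [exH, exV, exSig, hR, not_le]
    intro h1 h2
    exact cW_sync (by omega) (by omega) h1 h2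
  · rw [ex_uOut, cW_mod4]
    simp only [exH, exV, exSig]
    intro h
    rw [lv_zero_of h]; simp
  · rw [ex_wOut, cW_mod4]
    simp only [exH, exV, exSig]
    intro h
    rw [lv_zero_of h]; simp
  · rw [ex_sMid, ex_tMid]
    exact midL_not_bad C hC i j
  · have e1 : wOut (exH C i j) (exV C i j) = (exH C i (j+1)).w := Fin.ext (ex_wOut C i j)
    unfold outH
    rw [e1, ex_sMid, ex_tMid]
    have e2 : (crossing C.psi (midL C i j).1 (midL C i j).2).1 = (lanes C i (j+1)).1 := by
      conv_rhs => unfold lanes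
      rw [rec2_a]; rfl
    rw [e2]
    have e3 : (exH C i (j+1)).aw = (exH C i j).aw + 1 := by
      apply Fin.ext
      rw [fin4_succ]
      simp only [exH, exSig]; omega
    rw [← e3]
    have e4 : (exH C i (j+1)).z = if rowInc (exH C i j).w (exV C i j).w (exV C i j).z ∧
        colInc (exH C i j).w (exV C i j).w (exV C i j).z then (exV C i j).z else
        decide (rowInc (exH C i j).w (exV C i j).w (exV C i j).z) := by
      simp only [exH, exV, exSig, hR, hQ]
      rcases lt_trichotomy (lv (i+1)) (lv (j+1)) with h | h | h
      · have := zz_after_lt (by omega) (by omega) h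
        rw [if_neg (by omega)]
        simp [h.le, this]
      · rw [if_pos (by omega)]
        simp [← zz_eq h]
      · have := zz_after_gt (by omega) (by omega) h
        rw [if_neg (by omega)]
        simp [h, this]
    rw [← e4]
    rfl
  · have e1 : uOut (exH C i j) (exV C i j) = (exV C (i+1) j).w := Fin.ext (ex_uOut C i j)
    unfold outV
    rw [e1, ex_sMid, ex_tMid]
    have e2 : (crossing C.psi (midL C i j).1 (midL C i j).2).2 = (lanes C (i+1) j).2 := by
      conv_rhs => unfold lanes
      rw [rec2_b]; rfl
    rw [e2]
    have e3 : (exV C (i+1) j).aw = (exV C i j).aw + 1 := by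
      apply Fin.ext
      rw [fin4_succ]
      simp only [exV, exSig]; omega
    rw [← e3]
    rfl

end NilCA

namespace NilCA

/-- Counter operations. -/
inductive Op where
  | keep | zero | inc
  deriving DecidableEq

def Op.eval (n k : ℕ) : Op → ℕ
  | .keep => k
  | .zero => 0
  | .inc => min (k + 1) n

/-- A computation layer with one bounded counter whose only test is `k < n`. -/
structure Sym (P Q : Type) where
  x0 : P
  y0 : Q
  psi : Bool → P → Q → (P × Op) × Q
  bad : P → Q → Bool

/-- The computation layer for counter bound `n`. -/
def Sym.comp {P Q : Type} (S : Sym P Q) (n : ℕ) : Comp (P × ℕ) Q where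
  x0 := (S.x0, 0)
  y0 := S.y0
  psi x y := (((S.psi (decide (x.2 < n)) x.1 y).1.1,
    (S.psi (decide (x.2 < n)) x.1 y).1.2.eval n x.2), (S.psi (decide (x.2 < n)) x.1 y).2)
  bad x y := S.bad x.1 y

section TM
open Turing

variable {Γ Λ : Type} [Inhabited Γ] [Inhabited Λ]

/-- Horizontal payloads. -/
inductive HP (A : Type) where
  | start | m1 | m2 | m3
  | pair : A → A → HP A

/-- Vertical payloads. -/
inductive VP (A : Type) where
  | v0
  | cell : A → VP A

/-- Local rule describing a step of the machine. -/
def gRule (M : TM0.Machine Γ Λ) (x y v : Γ × Option Λ) : Γ × Option Λ :=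
  match y.2 with
  | some q => (match M q y.1 with
    | some (q', .write b) => (b, some q')
    | _ => (y.1, none))
  | none => (y.1,
    match x.2.bind (fun q => M q x.1) with
    | some (q', .move .right) => some q'
    | _ => match v.2.bind (fun q => M q v.1) with
      | some (q', .move .left) => some q'
      | _ => none)

/-- The computation layer simulating `M` on the input word `c0 c1 c2^n`. -/
def tmSym (M : TM0.Machine Γ Λ) (q0 : Λ) (c0 c1 c2 : Γ) : Sym (HP (Γ × Option Λ)) (VP (Γ × Option Λ)) where
  x0 := .start
  y0 := .v0
  psi b x y := match x, y with
    | .start, .v0 => ((.m1, .zero), .cell (c0, some q0))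
    | .m1, .v0 => ((.m2, .zero), .cell (c1, none))
    | .m2, .v0 => if b then ((.m2, .inc), .cell (c2, none)) else ((.m3, .zero), .cell (default, none))
    | .m3, .v0 => ((.m3, .zero), .cell (default, none))
    | .start, .cell v => ((.pair (default, none) v, .zero), .cell (gRule M (default, none) (default, none) v))
    | .pair x y, .cell v => ((.pair y v, .zero), .cell (gRule M x y v))
    | _, y => ((.m3, .zero), y)
  bad _ y := match y with
    | .cell (a, some q) => (M q a).isNone
    | _ => false

/-- Cell content at position `q` when the head is at `p`. -/
def wCell (c : TM0.Cfg Γ Λ) (p q : ℤ) : Γ × Option Λ :=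
  (c.Tape.nth (q - p), if q = p then some c.q else none)

theorem wCell_step (M : TM0.Machine Γ Λ) (c c' : TM0.Cfg Γ Λ) (h : TM0.step M c = some c') (p : ℤ) :
    ∃ d : ℤ, -1 ≤ d ∧ ∀ q, wCell c' (p + d) q = gRule M (wCell c p (q-1)) (wCell c p q) (wCell c p (q+1)) := by
  obtain ⟨st, T⟩ := c
  simp only [TM0.step, Option.map_eq_some_iff] at h
  obtain ⟨⟨q', a⟩, hM, rfl⟩ := h
  have hz : ∀ q, q = p → T.nth (q - p) = T.head := by rintro q rfl; simp
  rcases a with d | b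
  · rcases d with _ | _
    · refine ⟨-1, le_refl _, fun q => ?_⟩
      have e1 : q - (p + -1) - 1 = q - p := by ring
      by_cases h1 : q = p
      · subst h1
        simp [wCell, gRule, hM]
      · by_cases h2 : q = p - 1
        · subst h2
          simp [wCell, gRule, hM, e1, show p - 1 - 1 ≠ p by omega]
          ring_nf
        · simp [wCell, gRule, h1, e1, show q + 1 ≠ p by omega, show q ≠ p + -1 by omega]
          by_cases h3 : q - 1 = p
          · simp [h3, hM]
          · simp [h3]
    · refine ⟨1, by omega, fun q => ?_⟩
      have e1 : q - (p + 1) + 1 = q - p := by ring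
      by_cases h1 : q = p
      · subst h1
        simp [wCell, gRule, hM]
      · by_cases h2 : q = p + 1
        · subst h2
          have e2 : (Tape.move Dir.right T).head = T.nth 1 := by
            rw [← Tape.nth_zero, Tape.move_right_nth]; rfl
          simp [wCell, gRule, hM, e2]
        · simp [wCell, gRule, h1, e1, show q - 1 ≠ p by omega, show q ≠ p + 1 by omega]
          by_cases h3 : q + 1 = p
          · simp [h3, hM]
          · simp [h3]
  · refine ⟨0, by omega, fun q => ?_⟩
    by_cases h1 : q = p
    · subst h1
      have e2 : (Tape.write b T).head = b := rfl
      simp [wCell, gRule, hM, e2]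
    · simp [wCell, gRule, h1, sub_eq_zero]
      by_cases h2 : q - 1 = p
      · simp [h2, hM, show q + 1 ≠ p by omega]
      · by_cases h3 : q + 1 = p
        · simp [h2, h3, hM]
        · simp [h2, h3]

/-- The configuration after `s` steps. -/
def runN (M : TM0.Machine Γ Λ) (c : TM0.Cfg Γ Λ) : ℕ → Option (TM0.Cfg Γ Λ)
  | 0 => some c
  | s+1 => (runN M c s).bind (TM0.step M)

theorem dom_iff_runN (M : TM0.Machine Γ Λ) (c : TM0.Cfg Γ Λ) :
    (StateTransition.eval (TM0.step M) c).Dom ↔ ∃ s c', runN M c s = some c' ∧ TM0.step M c' = none := by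
  rw [Part.dom_iff_mem]
  constructor
  · rintro ⟨b, hb⟩
    obtain ⟨h1, h2⟩ := StateTransition.mem_eval.1 hb
    suffices h : ∃ s, runN M c s = some b by
      obtain ⟨s, hs⟩ := h; exact ⟨s, b, hs, h2⟩
    clear hb h2
    induction h1 with
    | refl => exact ⟨0, rfl⟩
    | tail _ h ih =>
      obtain ⟨s, hs⟩ := ih
      exact ⟨s+1, by simpa [runN, hs] using h⟩
  · rintro ⟨s, c', hs, h2⟩
    refine ⟨c', StateTransition.mem_eval.2 ⟨?_, h2⟩⟩
    clear h2
    induction s generalizing c' with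
    | zero => simp [runN] at hs; subst hs; exact Relation.ReflTransGen.refl
    | succ s ih =>
      simp only [runN, Option.bind_eq_some_iff] at hs
      obtain ⟨b, hb, h⟩ := hs
      exact (ih b hb).tail h

variable (M : TM0.Machine Γ Λ) (q0 : Λ) (c0 c1 c2 : Γ) (n : ℕ)

theorem tm_row0 : (∀ t, t ≤ n → (pay ((tmSym M q0 c0 c1 c2).comp n) 0 (t+2)).1 = (HP.m2, t)) ∧
    (∀ t, n < t → (pay ((tmSym M q0 c0 c1 c2).comp n) 0 (t+2)).1 = (HP.m3, 0)) := by
  set C := (tmSym M q0 c0 c1 c2).comp n with hC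
  have h0 : (pay C 0 0).1 = (HP.start, 0) := by rw [pay_x0]; rfl
  have h1 : (pay C 0 1).1 = (HP.m1, 0) := by
    rw [pay_x, h0, pay_y0]; simp [hC, Sym.comp, tmSym, Op.eval]
  have h2 : (pay C 0 2).1 = (HP.m2, 0) := by
    rw [pay_x, h1, pay_y0]; simp [hC, Sym.comp, tmSym, Op.eval]
  have A : ∀ t, t ≤ n → (pay C 0 (t+2)).1 = (HP.m2, t) := by
    intro t
    induction t with
    | zero => intro _; exact h2
    | succ t ih =>
      intro h
      rw [show t + 1 + 2 = (t + 2) + 1 by ring, pay_x, ih (by omega), pay_y0]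
      simp [hC, Sym.comp, tmSym, Op.eval, show t < n by omega]
  refine ⟨A, ?_⟩
  intro t ht
  obtain ⟨d, rfl⟩ : ∃ d, t = n + 1 + d := ⟨t - (n+1), by omega⟩
  induction d with
  | zero =>
    rw [show n + 1 + 0 + 2 = (n + 2) + 1 by ring, pay_x, A n le_rfl, pay_y0]
    simp [hC, Sym.comp, tmSym, Op.eval]
  | succ d ih =>
    rw [show n + 1 + (d + 1) + 2 = (n + 1 + d + 2) + 1 by ring, pay_x, ih (by omega), pay_y0]
    simp [hC, Sym.comp, tmSym, Op.eval]

/-- The initial word. -/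
def word0 (t : ℕ) : Γ := if t = 0 then c0 else if t = 1 then c1 else if t < n + 2 then c2 else default

theorem tm_row1 (t : ℕ) : (pay ((tmSym M q0 c0 c1 c2).comp n) 1 t).2 =
    VP.cell (word0 c0 c1 c2 n t, if t = 0 then some q0 else none) := by
  obtain ⟨A, B⟩ := tm_row0 M q0 c0 c1 c2 n
  rw [pay_y]
  rcases t with _ | _ | t
  · rw [pay_x0, pay_y0]; simp [Sym.comp, tmSym, word0]
  · rw [pay_x, pay_x0, pay_y0, pay_y0]; simp [Sym.comp, tmSym, word0]
  · rw [pay_y0]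
    rcases lt_trichotomy t n with h | h | h
    · rw [A t h.le]; simp [Sym.comp, tmSym, word0, h]
    · rw [A t h.le]; simp [Sym.comp, tmSym, word0, h]
    · rw [B t h]; simp [Sym.comp, tmSym, word0, h.not_gt]

theorem tm_step (s : ℕ) (w : ℤ → Γ × Option Λ) (hb : ∀ q : ℤ, q < -s → w q = (default, none))
    (hw : ∀ t : ℕ, (pay ((tmSym M q0 c0 c1 c2).comp n) (s+1) t).2 = VP.cell (w (t - s))) (t : ℕ) :
    (pay ((tmSym M q0 c0 c1 c2).comp n) (s+2) t).2 =
      VP.cell (gRule M (w (t - s - 2)) (w (t - s - 1)) (w (t - s))) := by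
  set C := (tmSym M q0 c0 c1 c2).comp n with hC
  have A : ∀ t : ℕ, (pay C (s+1) (t+1)).1.1 = HP.pair (w (t - s - 1)) (w (t - s)) := by
    intro t
    induction t with
    | zero =>
      rw [pay_x, pay_x0, hw, hb (_ - 1) (by push_cast; omega)]
      simp [hC, Sym.comp, tmSym]
    | succ t ih =>
      rw [pay_x, hw]
      simp only [hC, Sym.comp] at ih ⊢
      rw [ih]
      simp [tmSym]
      ring_nf
  rw [pay_y, hw]
  rcases t with _ | t
  · rw [pay_x0, hb (_ - 2) (by push_cast; omega), hb (_ - 1) (by push_cast; omega)]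
    simp [hC, Sym.comp, tmSym]
  · have := A t
    simp only [hC, Sym.comp] at this ⊢
    rw [this]
    simp [tmSym]
    ring_nf

variable {T0 : Tape Γ}

theorem tm_inv (hT : ∀ t : ℕ, T0.nth t = word0 c0 c1 c2 n t)
    (hT' : ∀ t : ℤ, t < 0 → T0.nth t = default) (s : ℕ) (c : TM0.Cfg Γ Λ)
    (hc : runN M ⟨q0, T0⟩ s = some c) : ∃ p : ℤ, -s ≤ p ∧
      (∀ q : ℤ, q < -s → wCell c p q = (default, none)) ∧
      ∀ t : ℕ, (pay ((tmSym M q0 c0 c1 c2).comp n) (s+1) t).2 = VP.cell (wCell c p (t - s)) := by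
  induction s generalizing c with
  | zero =>
    simp [runN] at hc; subst hc
    refine ⟨0, by simp, ?_, ?_⟩
    · intro q hq
      simp at hq
      simp [wCell, hT' q hq, hq.ne]
    · intro t
      rw [tm_row1]
      simp [wCell, hT]
  | succ s ih =>
    simp only [runN, Option.bind_eq_some_iff] at hc
    obtain ⟨b, hb, h⟩ := hc
    obtain ⟨p, hp, h1, h2⟩ := ih b hb
    obtain ⟨d, hd, h3⟩ := wCell_step M b c h p
    refine ⟨p + d, by push_cast; omega, ?_, ?_⟩
    · intro q hq
      push_cast at hq
      have h4 := h3 q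
      rw [h1 q (by omega), h1 (q-1) (by omega)] at h4
      have h5 : (wCell c (p+d) q).1 = default := by rw [h4]; simp [gRule]
      have h6 : q ≠ p + d := by omega
      ext1
      · exact h5
      · simp [wCell, h6]
    · intro t
      rw [tm_step M q0 c0 c1 c2 n s _ h1 h2, h3]
      push_cast
      ring_nf

theorem tm_bad_iff (hT : ∀ t : ℕ, T0.nth t = word0 c0 c1 c2 n t)
    (hT' : ∀ t : ℤ, t < 0 → T0.nth t = default) :
    (StateTransition.eval (TM0.step M) ⟨q0, T0⟩).Dom ↔
    ∃ s t, ((tmSym M q0 c0 c1 c2).comp n).bad (pay ((tmSym M q0 c0 c1 c2).comp n) s t).1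
      (pay ((tmSym M q0 c0 c1 c2).comp n) s t).2 = true := by
  rw [dom_iff_runN]
  constructor
  · rintro ⟨s, c, hc, h⟩
    obtain ⟨p, hp, h1, h2⟩ := tm_inv M q0 c0 c1 c2 n hT hT' s c hc
    refine ⟨s+1, (p + s).toNat, ?_⟩
    rw [h2]
    have e : (((p + s).toNat : ℕ) : ℤ) - s = p := by omega
    rw [e]
    obtain ⟨q, T⟩ := c
    simp only [TM0.step, Option.map_eq_none_iff] at h
    simp [Sym.comp, tmSym, wCell, h]
  · rintro ⟨s, t, h⟩
    by_contra hn
    push Not at hn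
    have hrun : ∀ s, ∃ c, runN M ⟨q0, T0⟩ s = some c := by
      intro s
      induction s with
      | zero => exact ⟨_, rfl⟩
      | succ s ih =>
        obtain ⟨c, hc⟩ := ih
        obtain ⟨c', hc'⟩ := Option.ne_none_iff_exists'.1 (hn s c hc)
        exact ⟨c', by simp [runN, hc, hc']⟩
    rcases s with _ | s
    · rw [pay_y0] at h
      simp [Sym.comp, tmSym] at h
    · obtain ⟨c, hc⟩ := hrun s
      obtain ⟨p, hp, h1, h2⟩ := tm_inv M q0 c0 c1 c2 n hT hT' s c hc
      have h3 := hn s c hc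
      rw [h2] at h
      obtain ⟨q, T⟩ := c
      by_cases e : (t:ℤ) - s = p
      · rw [e] at h
        simp [Sym.comp, tmSym, wCell] at h
        simp [TM0.step, h] at h3
      · simp [Sym.comp, tmSym, wCell, e] at h

end TM
end NilCA

namespace NilCA
open Turing

section restrict
variable {Γ Λ : Type} [Inhabited Γ] [Inhabited Λ]

/-- Restriction of a machine to a closed set of states. -/
noncomputable def restr (M : TM0.Machine Γ Λ) (S : Set Λ) [Inhabited S]
    (hS : ∀ {q a q' s}, (q', s) ∈ M q a → q ∈ S → q' ∈ S) : TM0.Machine Γ S :=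
  fun q a => match h : M q.1 a with
    | none => none
    | some (q', s) => some (⟨q', hS h q.2⟩, s)

theorem restr_dom (M : TM0.Machine Γ Λ) (S : Set Λ) [Inhabited S]
    (hS : ∀ {q a q' s}, (q', s) ∈ M q a → q ∈ S → q' ∈ S) (q : S) (T : Tape Γ) :
    (StateTransition.eval (TM0.step (restr M S hS)) ⟨q, T⟩).Dom ↔
    (StateTransition.eval (TM0.step M) ⟨q.1, T⟩).Dom := by
  have H : StateTransition.Respects (TM0.step (restr M S hS)) (TM0.step M)
      (fun a b => (⟨a.q.1, a.Tape⟩ : TM0.Cfg Γ Λ) = b) := by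
    rintro ⟨q, T⟩ b rfl
    rcases h : M q.1 T.1 with _ | ⟨q', s⟩
    · have h1 : restr M S hS q T.1 = none := by
        unfold restr; split <;> simp_all
      simp [TM0.step, h, h1]
    · have h1 : restr M S hS q T.1 = some (⟨q', hS h q.2⟩, s) := by
        unfold restr
        split
        · simp_all
        · rename_i a b hab
          rw [h] at hab
          simp only [Option.some.injEq, Prod.mk.injEq] at hab
          simp [hab]
      simp only [TM0.step, h1, Option.map_some]
      refine ⟨_, rfl, Relation.TransGen.single ?_⟩
      simp only [Option.mem_def, TM0.step, h, Option.map_some]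
  exact (StateTransition.tr_eval_dom H rfl).symm
end restrict

section chain
variable {K : Type} [DecidableEq K] {Γ : K → Type} {Λ σ : Type} [Inhabited Λ] [Inhabited σ]

theorem chain_dom (M : Λ → TM2.Stmt Γ Λ σ) (St : ∀ k, List (Γ k))
    (L : ListBlank (∀ k, Option (Γ k)))
    (hL : ∀ k, L.map (proj k) = ListBlank.mk ((St k).map some).reverse) :
    (StateTransition.eval (TM2.step M) ⟨some default, default, St⟩).Dom ↔
    (StateTransition.eval (TM0.step (TM1to0.tr (TM2to1.tr M)))
      ⟨default, Tape.mk' ∅ (TM2to1.addBottom L)⟩).Dom := by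
  have h1 := StateTransition.tr_eval_dom (TM2to1.tr_respects M)
    (TM2to1.TrCfg.mk (q := some default) (v := default) L hL)
  rw [← h1]
  have h2 := StateTransition.tr_eval_dom (TM1to0.tr_respects (TM2to1.tr M))
    (a₁ := ⟨some (TM2to1.Λ'.normal default), default, Tape.mk' ∅ (TM2to1.addBottom L)⟩) rfl
  exact h2.symm
end chain

theorem trPosNum_pow (n : ℕ) : ∃ p : PosNum, ((2 ^ n : ℕ) : Num) = Num.pos p ∧
    PartrecToTM2.trPosNum p = List.replicate n PartrecToTM2.Γ'.bit0 ++ [PartrecToTM2.Γ'.bit1] := by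
  induction n with
  | zero => exact ⟨PosNum.one, rfl, rfl⟩
  | succ n ih =>
    obtain ⟨p, hp, h⟩ := ih
    refine ⟨PosNum.bit0 p, ?_, ?_⟩
    · rw [pow_succ, mul_comm, two_mul, Nat.cast_add, hp, Num.bit0_of_bit0]
      rfl
    · simp [PartrecToTM2.trPosNum, h, List.replicate_succ]

theorem trList_pow (n : ℕ) : PartrecToTM2.trList [2 ^ n] =
    List.replicate n PartrecToTM2.Γ'.bit0 ++ [PartrecToTM2.Γ'.bit1, PartrecToTM2.Γ'.cons] := by
  obtain ⟨p, hp, h⟩ := trPosNum_pow n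
  simp only [PartrecToTM2.trList, PartrecToTM2.trNat, hp, PartrecToTM2.trNum, h]
  simp

/-- A stack symbol on the main stack. -/
def mainSym (a : PartrecToTM2.Γ') : ∀ _ : PartrecToTM2.K', Option PartrecToTM2.Γ' :=
  fun k => if k = PartrecToTM2.K'.main then some a else none

def inputList (n : ℕ) : List PartrecToTM2.Γ' :=
  PartrecToTM2.Γ'.cons :: PartrecToTM2.Γ'.bit1 :: List.replicate n PartrecToTM2.Γ'.bit0

def inputBlank (n : ℕ) : ListBlank (∀ _ : PartrecToTM2.K', Option PartrecToTM2.Γ') :=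
  ListBlank.mk ((inputList n).map mainSym)

theorem inputBlank_proj (n : ℕ) (k : PartrecToTM2.K') :
    (inputBlank n).map (proj k) = ListBlank.mk
      ((PartrecToTM2.K'.elim (PartrecToTM2.trList [2 ^ n]) [] [] [] k).map some).reverse := by
  have hl : (PartrecToTM2.trList [2 ^ n]).reverse = inputList n := by
    rw [trList_pow]; simp [inputList]
  by_cases hk : k = PartrecToTM2.K'.main
  · subst hk
    rw [PartrecToTM2.K'.elim, ← List.map_reverse, hl]
    simp [inputBlank, ListBlank.map_mk, Function.comp_def, proj, mainSym]
  · have h1 : PartrecToTM2.K'.elim (PartrecToTM2.trList [2 ^ n]) [] [] [] k = [] := by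
      cases k <;> simp_all [PartrecToTM2.K'.elim]
    rw [h1]
    apply ListBlank.ext
    intro i
    rw [ListBlank.nth_map]
    simp only [inputBlank, ListBlank.nth_mk, List.map_nil, List.reverse_nil]
    by_cases hi : i < (inputList n).length
    · rw [List.getI_eq_getElem _ (by simpa using hi)]
      simp [proj, mainSym, hk]
      rfl
    · rw [List.getI_eq_default _ (by simpa using hi)]
      simp [proj]

abbrev TG := TM2to1.Γ' PartrecToTM2.K' (fun _ => PartrecToTM2.Γ')

def tgMk (b : Bool) (f : ∀ _ : PartrecToTM2.K', Option PartrecToTM2.Γ') : TG := (b, f)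

theorem word0_succ {Γ : Type} [Inhabited Γ] (c0 c1 c2 : Γ) (n t : ℕ) :
    word0 c0 c1 c2 n (t + 1 + 1) = if t < n then c2 else default := by
  simp [word0]

theorem input_nth (n t : ℕ) : (TM2to1.addBottom (inputBlank n)).nth t =
    word0 (Γ := TG) (tgMk true (mainSym .cons)) (tgMk false (mainSym .bit1)) (tgMk false (mainSym .bit0)) n t := by
  have h2 : ((TM2to1.addBottom (inputBlank n)).nth t).2 = _ := TM2to1.addBottom_nth_snd _ t
  have h1 : ((TM2to1.addBottom (inputBlank n)).nth t).1 = decide (t = 0) := by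
    cases t with
    | zero => rw [ListBlank.nth_zero, TM2to1.addBottom_head_fst]; simp
    | succ t => rw [TM2to1.addBottom_nth_succ_fst]; simp
  have h3 : (inputBlank n).nth t = ((inputList n).map mainSym).getI t := by
    simp [inputBlank]
  rw [h3] at h2
  apply Prod.ext
  · rw [h1]
    rcases t with _ | _ | t
    · simp [word0, tgMk]
    · simp [word0, tgMk]
    · rw [word0_succ]
      by_cases h : t < n
      · rw [if_pos h]; rfl
      · rw [if_neg h]; rfl
  · rw [h2]
    rcases t with _ | _ | t
    · simp [inputList, word0, tgMk]
    · simp [inputList, word0, tgMk]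
    · rw [word0_succ]
      simp only [inputList, List.map_cons, List.getI_cons_succ]
      by_cases h : t < n
      · rw [if_pos h, List.getI_eq_getElem _ (by simpa using h)]; simp [tgMk]
      · rw [if_neg h, List.getI_eq_default _ (by simpa using h)]; rfl

theorem mk'_neg {Γ : Type} [Inhabited Γ] (R : ListBlank Γ) (t : ℤ) (ht : t < 0) :
    (Tape.mk' ∅ R).nth t = default := by
  obtain ⟨m, rfl⟩ : ∃ m : ℕ, t = Int.negSucc m := ⟨(-t-1).toNat, by omega⟩
  change (ListBlank.nth (∅ : ListBlank Γ) m) = default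
  change (ListBlank.nth (ListBlank.mk []) m) = default
  simp

theorem log_part : ∃ l : ℕ → ℕ, Computable l ∧ ∀ n, l (2 ^ n) = n := by
  refine ⟨fun m => m.findGreatest (fun k => 2 ^ k = m), ?_, ?_⟩
  · have hpow : Primrec₂ (fun a b : ℕ => a ^ b) := Primrec₂.unpaired'.1 Nat.Primrec.pow
    have : PrimrecRel (fun (m k : ℕ) => 2 ^ k = m) :=
      Primrec.eq.comp (hpow.comp (Primrec.const 2) Primrec.snd) Primrec.fst
    exact (Primrec.nat_findGreatest Primrec.id this).to_comp
  · intro n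
    have h := Nat.findGreatest_spec (P := fun k => 2 ^ k = 2 ^ n) (m := n) (n := 2 ^ n)
      Nat.lt_two_pow_self.le rfl
    exact Nat.pow_right_injective le_rfl h

theorem exists_code_undec : ∃ c : ToPartrec.Code,
    ¬ ComputablePred (fun n : ℕ => (c.eval [2 ^ n]).Dom) := by
  obtain ⟨l, hl, hl2⟩ := log_part
  let f : ℕ →. ℕ := fun m => Nat.Partrec.Code.eval (Denumerable.ofNat Nat.Partrec.Code (l m)) 0
  have hf : Partrec f := Nat.Partrec.Code.eval_part.comp
    ((Computable.ofNat Nat.Partrec.Code).comp hl) (Computable.const 0)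
  obtain ⟨c, hc⟩ := ToPartrec.Code.exists_code (Nat.Partrec'.part_iff₁.2 hf)
  refine ⟨c, fun h => ComputablePred.halting_problem 0 ?_⟩
  have e : ∀ n, (c.eval [2 ^ n]).Dom ↔ (Nat.Partrec.Code.eval (Denumerable.ofNat Nat.Partrec.Code n) 0).Dom := by
    intro n
    have := hc (2 ^ n ::ᵥ List.Vector.nil)
    have h2 : c.eval [2 ^ n] = pure <$> f (2 ^ n) := this
    rw [h2]
    simp [f, hl2]
  obtain ⟨g, hg, hge⟩ := ComputablePred.computable_iff.1 h
  refine ComputablePred.computable_iff.2 ⟨fun d => g (Encodable.encode d), hg.comp Computable.encode, ?_⟩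
  funext d
  have := congrFun hge (Encodable.encode d)
  simp only [e, Denumerable.ofNat_encode] at this
  exact this

theorem TG_finite : Finite TG := by
  have : Finite PartrecToTM2.K' := by
    have h : Function.Injective (fun k : PartrecToTM2.K' => (match k with
      | .main => 0 | .rev => 1 | .aux => 2 | .stack => 3 : Fin 4)) := by
      intro a b; cases a <;> cases b <;> simp
    exact Finite.of_injective _ h
  unfold TG TM2to1.Γ'
  infer_instance

theorem exists_machine : ∃ (Γ Λ : Type) (_ : Inhabited Γ) (_ : Inhabited Λ) (_ : Finite Γ)
    (_ : Finite Λ) (M : TM0.Machine Γ Λ) (q0 : Λ) (c0 c1 c2 : Γ) (T : ℕ → Tape Γ),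
    (∀ n (t : ℕ), (T n).nth t = word0 c0 c1 c2 n t) ∧ (∀ n (t : ℤ), t < 0 → (T n).nth t = default) ∧
    ¬ ComputablePred (fun n => (StateTransition.eval (TM0.step M) ⟨q0, T n⟩).Dom) := by
  obtain ⟨c, hc⟩ := exists_code_undec
  let _ : Inhabited PartrecToTM2.Λ' := ⟨PartrecToTM2.trNormal c PartrecToTM2.Cont'.halt⟩
  have s2 := PartrecToTM2.tr_supports c PartrecToTM2.Cont'.halt
  have s1 := TM2to1.tr_supports (M := PartrecToTM2.tr) s2
  have s0 := TM1to0.tr_supports _ s1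
  set S := TM1to0.trStmts (TM2to1.tr PartrecToTM2.tr)
    (TM2to1.trSupp PartrecToTM2.tr (PartrecToTM2.codeSupp c PartrecToTM2.Cont'.halt)) with hS
  let inst : Inhabited (S : Set (TM1to0.Λ' (TM2to1.tr PartrecToTM2.tr))) := ⟨⟨default, s0.1⟩⟩
  refine ⟨TG, _, inferInstance, inst, TG_finite, ?_, restr (TM1to0.tr (TM2to1.tr PartrecToTM2.tr)) _ s0.2, default,
    tgMk true (mainSym .cons), tgMk false (mainSym .bit1), tgMk false (mainSym .bit0),
    fun n => Tape.mk' ∅ (TM2to1.addBottom (inputBlank n)), ?_, ?_, ?_⟩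
  · exact Finset.finite_toSet S
  · intro n t
    rw [Tape.mk'_nth_nat, input_nth]
  · intro n t ht
    exact mk'_neg _ t ht
  · convert hc using 3 with n
    rw [restr_dom]
    have h := chain_dom PartrecToTM2.tr _ _ (inputBlank_proj n)
    refine h.symm.trans ?_
    have h2 := PartrecToTM2.tr_eval c [2 ^ n]
    have h3 : (StateTransition.eval (TM2.step PartrecToTM2.tr) (PartrecToTM2.init c [2 ^ n])).Dom ↔
      (c.eval [2 ^ n]).Dom := by rw [h2]; rfl
    exact h3

end NilCA

namespace NilCA

/-! ### Naturality of crossings -/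

section Natural
variable {X X' Y : Type}

/-- A lane only carries good payloads. -/
def Lane.good (g : X → Prop) : Lane X → Prop
  | .act x => g x
  | _ => True

theorem upd_map (f : X → X') (x0 : X) (a c : ℕ) (s : Lane X) :
    upd (f x0) a c (s.map f) = (upd x0 a c s).map f := by
  unfold upd
  cases s <;> split_ifs <;> simp [Lane.map]

theorem upd_good (g : X → Prop) (x0 : X) (h0 : g x0) (a c : ℕ) (s : Lane X) (hs : s.good g) :
    (upd x0 a c s).good g := by
  unfold upd
  cases s <;> split_ifs <;> simp_all [Lane.good]

theorem nat_step (C : Comp X Y) (C' : Comp X' Y) (f : X → X') (hx0 : f C.x0 = C'.x0)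
    (hy0 : C.y0 = C'.y0) (g : X → Prop) (h0 : g C.x0)
    (hg : ∀ x y, g x → C'.psi (f x) y = (f (C.psi x y).1, (C.psi x y).2) ∧
      C'.bad (f x) y = C.bad x y) (h : Sig X) (v : Sig Y) (hh : h.s.good g) :
    (okay C' (h.map f) v ↔ okay C h v) ∧ outH C' (h.map f) v = (outH C h v).map f ∧
      outV C' (h.map f) v = outV C h v := by
  have e1 : sMid C'.x0 (h.map f) v = (sMid C.x0 h v).map f := by
    rw [← hx0]; exact upd_map f C.x0 _ _ h.s
  have e2 : tMid C'.y0 (h.map f) v = tMid C.y0 h v := by rw [← hy0]; rfl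
  have e3 : (sMid C.x0 h v).good g := upd_good g _ h0 _ _ _ hh
  have e4 : structOK (h.map f) v ↔ structOK h v := Iff.rfl
  have e5 : (badLane C'.bad ((sMid C.x0 h v).map f) (tMid C.y0 h v) ↔
      badLane C.bad (sMid C.x0 h v) (tMid C.y0 h v)) ∧
      crossing C'.psi ((sMid C.x0 h v).map f) (tMid C.y0 h v) =
      ((crossing C.psi (sMid C.x0 h v) (tMid C.y0 h v)).1.map f,
        (crossing C.psi (sMid C.x0 h v) (tMid C.y0 h v)).2) := by
    generalize sMid C.x0 h v = s at *
    generalize tMid C.y0 h v = t at *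
    cases s <;> cases t <;> simp [badLane, crossing, Lane.map]
    rename_i x y
    have := hg x y e3
    simp [this.1, this.2]
  refine ⟨?_, ?_, ?_⟩
  · unfold okay; rw [e1, e2, e4, e5.1]
  · unfold outH
    rw [e1, e2, e5.2]; rfl
  · unfold outV
    rw [e1, e2, e5.2]; rfl

end Natural

section Symb
variable {P Q : Type}

/-- Symbolic version of a computation layer. -/
def Sym.symb (S : Sym P Q) (b : Bool) : Comp (P × Op) Q where
  x0 := (S.x0, .zero)
  y0 := S.y0
  psi x y := S.psi b x.1 y
  bad x y := S.bad x.1 y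

/-- Resets do not depend on the counter. -/
def Sym.Reset (S : Sym P Q) : Prop :=
  ∀ b b' y, S.psi b S.x0 y = S.psi b' S.x0 y ∧ (S.psi b S.x0 y).1.2 = .zero

def laneOp : Lane (P × Op) → Op
  | .act x => x.2
  | _ => .zero

theorem symb_step (S : Sym P Q) (hS : S.Reset) (n k : ℕ) (h : Sig P) (v : Sig Q) :
    (okay (S.comp n) (h.map (·, k)) v ↔
      okay (S.symb (decide (k < n))) (h.map (·, Op.keep)) v) ∧
    outH (S.comp n) (h.map (·, k)) v =
      ((outH (S.symb (decide (k < n))) (h.map (·, Op.keep)) v).map Prod.fst).map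
        (·, (laneOp (outH (S.symb (decide (k < n))) (h.map (·, Op.keep)) v).s).eval n k) ∧
    outV (S.comp n) (h.map (·, k)) v = outV (S.symb (decide (k < n))) (h.map (·, Op.keep)) v := by
  have key := nat_step (S.symb (decide (k < n))) (S.comp n) (fun x => (x.1, x.2.eval n k)) rfl rfl
    (fun x => x.2 = .keep ∨ x = (S.x0, .zero)) (Or.inr rfl) (by
      rintro ⟨p, o⟩ y (h | h)
      · simp only at h; subst h
        exact ⟨rfl, rfl⟩
      · cases h
        refine ⟨?_, rfl⟩
        have h1 := hS (decide (0 < n)) (decide (k < n)) y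
        have h2 := hS (decide (k < n)) (decide (k < n)) y
        simp only [Sym.comp, Sym.symb, Op.eval, h1.1]
        simp [h2.2]) (h.map (·, Op.keep)) v (by
      cases hs : h.s <;> simp [Sig.map, Lane.map, Lane.good, hs])
  have e : (h.map (·, Op.keep)).map (fun x : P × Op => (x.1, x.2.eval n k)) = h.map (·, k) := by
    cases hs : h.s <;> simp [Sig.map, Lane.map, hs, Op.eval]
  rw [e] at key
  refine ⟨key.1, ?_, key.2.2⟩
  rw [key.2.1]
  generalize outH (S.symb (decide (k < n))) (h.map (·, Op.keep)) v = z
  cases hs : z.s <;> simp [Sig.map, Lane.map, hs, laneOp]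

end Symb

instance {X : Type} [Finite X] : Finite (Lane X) :=
  Finite.of_injective (β := Option (Option X)) (fun s => match s with
    | .blk => none | .pre => some none | .act x => some (some x)) (by
    intro a b; cases a <;> cases b <;> simp)
instance {X : Type} [Finite X] : Finite (Sig X) :=
  Finite.of_injective (β := Fin 4 × Fin 16 × Fin 4 × Bool × Fin 4 × Fin 4 × Lane X)
    (fun s => (s.a, s.w, s.k, s.z, s.aw, s.ak, s.s)) (by
    rintro ⟨⟩ ⟨⟩; simp)
instance {X : Type} [Finite X] : Finite (HP X) :=
  Finite.of_injective (β := Fin 4 ⊕ (X × X)) (fun s => match s with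
    | .start => .inl 0 | .m1 => .inl 1 | .m2 => .inl 2 | .m3 => .inl 3
    | .pair x y => .inr (x, y)) (by
    intro a b; cases a <;> cases b <;> simp)
instance {X : Type} [Finite X] : Finite (VP X) :=
  Finite.of_injective (β := Option X) (fun s => match s with
    | .v0 => none | .cell x => some x) (by
    intro a b; cases a <;> cases b <;> simp)

theorem tmSym_reset {Γ Λ : Type} [Inhabited Γ] [Inhabited Λ] (M : Turing.TM0.Machine Γ Λ)
    (q0 : Λ) (c0 c1 c2 : Γ) : (tmSym M q0 c0 c1 c2).Reset := by
  intro b b' y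
  cases y <;> simp [tmSym]

/-! ### The cellular automaton -/

section CA
variable {P Q : Type} {m : ℕ} (e : Sig P × Sig Q ≃ Fin m) (S : Sym P Q)

/-- The finite transition table. -/
def table (b : Bool) (t1 t2 : Fin m) : Option (Fin m × Op) :=
  if okay (S.symb b) ((e.symm t1).1.map (·, Op.keep)) (e.symm t2).2 then
    some (e ((outH (S.symb b) ((e.symm t1).1.map (·, Op.keep)) (e.symm t2).2).map Prod.fst,
      outV (S.symb b) ((e.symm t1).1.map (·, Op.keep)) (e.symm t2).2),
      laneOp (outH (S.symb b) ((e.symm t1).1.map (·, Op.keep)) (e.symm t2).2).s)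
  else none

theorem code_div (a : Fin m) (k : ℕ) : (1 + (a : ℕ) + m * k - 1) / m = k := by
  have := a.2
  rw [show 1 + (a : ℕ) + m * k - 1 = a + m * k by omega, Nat.add_mul_div_left _ _ (by omega),
    Nat.div_eq_of_lt this, zero_add]

variable [NeZero m]

/-- Transition on numerical states; `0` is the spreading state. -/
def stp (n x y : ℕ) : ℕ :=
  if x = 0 ∨ y = 0 then 0 else
    ((table e S (decide ((x-1)/m < n)) (Fin.ofNat m (x-1)) (Fin.ofNat m (y-1))).map
      (fun r => 1 + r.1 + m * r.2.eval n ((x-1)/m))).getD 0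

def hOf (x : ℕ) : Sig (P × ℕ) := (e.symm (Fin.ofNat m (x-1))).1.map (·, (x-1)/m)
def vOf (x : ℕ) : Sig Q := (e.symm (Fin.ofNat m (x-1))).2

theorem code_mod (a : Fin m) (k : ℕ) : Fin.ofNat m (1 + (a : ℕ) + m * k - 1) = a := by
  have := a.2
  ext
  rw [show 1 + (a : ℕ) + m * k - 1 = a + m * k by omega]
  simp [Nat.mod_eq_of_lt this]

theorem hOf_code (a : Fin m) (k : ℕ) : hOf e (1 + (a : ℕ) + m * k) = (e.symm a).1.map (·, k) := by
  unfold hOf; rw [code_div, code_mod]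
theorem vOf_code (a : Fin m) (k : ℕ) : vOf e (1 + (a : ℕ) + m * k) = (e.symm a).2 := by
  unfold vOf; rw [code_mod]

theorem stp_zero_left (n y : ℕ) : stp e S n 0 y = 0 := by simp [stp]
theorem stp_zero_right (n x : ℕ) : stp e S n x 0 = 0 := by simp [stp]

theorem stp_ok (hS : S.Reset) (n x y : ℕ) (hx : x ≠ 0) (hy : y ≠ 0)
    (h : okay (S.comp n) (hOf e x) (vOf e y)) :
    stp e S n x y ≠ 0 ∧ hOf e (stp e S n x y) = outH (S.comp n) (hOf e x) (vOf e y) ∧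
      vOf e (stp e S n x y) = outV (S.comp n) (hOf e x) (vOf e y) := by
  have key := symb_step S hS n ((x-1)/m) (e.symm (Fin.ofNat m (x-1))).1 (vOf e y)
  have hs : stp e S n x y = 1 + ((e ((outH (S.symb (decide ((x-1)/m < n))) ((e.symm (Fin.ofNat m (x-1))).1.map (·, Op.keep)) (vOf e y)).map Prod.fst,
      outV (S.symb (decide ((x-1)/m < n))) ((e.symm (Fin.ofNat m (x-1))).1.map (·, Op.keep)) (vOf e y)) : Fin m) : ℕ) +
      m * (laneOp (outH (S.symb (decide ((x-1)/m < n))) ((e.symm (Fin.ofNat m (x-1))).1.map (·, Op.keep)) (vOf e y)).s).eval n ((x-1)/m) := by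
    have := key.1.1 h
    unfold vOf at this
    rw [stp, if_neg (by omega), table, if_pos this]; rfl
  refine ⟨by omega, ?_, ?_⟩
  · rw [hs, hOf_code, Equiv.symm_apply_apply]; exact key.2.1.symm
  · rw [hs, vOf_code, Equiv.symm_apply_apply]; exact key.2.2.symm

theorem stp_not_ok (hS : S.Reset) (n x y : ℕ) 
    (h : ¬ okay (S.comp n) (hOf e x) (vOf e y)) : stp e S n x y = 0 := by
  have key := symb_step S hS n ((x-1)/m) (e.symm (Fin.ofNat m (x-1))).1 (vOf e y)
  have := fun h' => h (key.1.2 h')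
  unfold vOf at this
  rw [stp, table, if_neg this]; simp

theorem stp_le (n x y : ℕ) (hx : x ≤ m * (n+1)) : stp e S n x y ≤ m * (n+1) := by
  unfold stp
  split_ifs with h
  · omega
  · cases hc : table e S (decide ((x-1)/m < n)) (Fin.ofNat m (x-1)) (Fin.ofNat m (y-1)) with
    | none => simp
    | some r =>
      simp only [Option.map_some, Option.getD_some]
      have h1 := r.1.2
      have hm : 0 < m := by omega
      have h2 : (x-1)/m ≤ n := by
        apply Nat.le_of_lt_succ
        rw [Nat.div_lt_iff_lt_mul hm, mul_comm]
        rw [Nat.succ_eq_add_one]; omega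
      have h3 : r.2.eval n ((x-1)/m) ≤ n := by
        cases r.2 <;> simp [Op.eval, h2]
      have h4 := Nat.mul_le_mul_left m h3
      rw [Nat.mul_succ]; omega

end CA

end NilCA

namespace NilCA

section CA
variable {P Q : Type} {m : ℕ} [NeZero m] (e : Sig P × Sig Q ≃ Fin m) (S : Sym P Q)

/-- The local rule of the cellular automaton. -/
def rule (n : ℕ) (u : Fin (2 * 1 + 1) → Fin (m * (n+1) + 1)) : Fin (m * (n+1) + 1) :=
  if u 2 = 0 then 0 else
    ⟨stp e S n (u 0) (u 1), Nat.lt_succ_of_le (stp_le e S n _ _ (Nat.le_of_lt_succ (u 0).2))⟩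

theorem rule_spreading (n : ℕ) : SpreadingRule (rule e S n) 0 := by
  rintro u ⟨j, hj⟩
  fin_cases j
  · have : u 0 = 0 := hj
    simp [rule, this, stp_zero_left]
  · have : u 1 = 0 := hj
    simp [rule, this, stp_zero_right]
  · have : u 2 = 0 := hj
    simp [rule, this]

theorem ca_step (n : ℕ) (x : Config (Fin (m * (n+1) + 1))) (i : ℤ) :
    ((caMap 1 (rule e S n) x i : Fin _) : ℕ) =
      if (x (i+1) : ℕ) = 0 then 0 else stp e S n (x (i-1)) (x i) := by
  have h0 : i - ((1:ℕ):ℤ) + (((0 : Fin (2*1+1)) : ℕ) : ℤ) = i - 1 := by simp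
  have h1 : i - ((1:ℕ):ℤ) + (((1 : Fin (2*1+1)) : ℕ) : ℤ) = i := by simp
  have h2 : i - ((1:ℕ):ℤ) + (((2 : Fin (2*1+1)) : ℕ) : ℤ) = i + 1 := by
    rw [show ((2 : Fin (2*1+1)) : ℕ) = 2 from rfl]; push_cast; ring
  simp only [caMap, rule, h0, h1, h2]
  by_cases h : x (i+1) = 0
  · simp [h]
  · have : (x (i+1) : ℕ) ≠ 0 := fun h' => h (Fin.ext h')
    simp [h]

theorem ca_ne (n : ℕ) (x : Config (Fin (m * (n+1) + 1))) (i : ℤ)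
    (h : ((caMap 1 (rule e S n) x i : Fin _) : ℕ) ≠ 0) :
    (x (i-1) : ℕ) ≠ 0 ∧ (x i : ℕ) ≠ 0 ∧ (x (i+1) : ℕ) ≠ 0 ∧
    ((caMap 1 (rule e S n) x i : Fin _) : ℕ) = stp e S n (x (i-1)) (x i) := by
  rw [ca_step] at h ⊢
  split_ifs at h ⊢ with h1
  · simp at h
  · refine ⟨?_, ?_, h1, rfl⟩
    · intro h0; rw [h0, stp_zero_left] at h; exact h rfl
    · intro h0; rw [h0, stp_zero_right] at h; exact h rfl

theorem ca_iter_ne (n : ℕ) (x : Config (Fin (m * (n+1) + 1))) (t d : ℕ) : ∀ (p : ℤ)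
    (_ : (((caMap 1 (rule e S n))^[t+d] x p : Fin _) : ℕ) ≠ 0) (q : ℤ) (_ : |q - p| ≤ d),
    (((caMap 1 (rule e S n))^[t] x q : Fin _) : ℕ) ≠ 0 := by
  induction d with
  | zero =>
    intro p h q hq
    have : q = p := by simp at hq; omega
    rw [this]; exact h
  | succ d ih =>
    intro p h q hq
    rw [← Nat.add_assoc, Function.iterate_succ_apply'] at h
    obtain ⟨h1, h2, h3, -⟩ := ca_ne e S n _ _ h
    push_cast at hq
    rcases lt_trichotomy q p with hl | hl | hl
    · exact ih _ h1 q (by rw [abs_le] at hq ⊢; omega)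
    · exact ih _ h2 q (by rw [abs_le] at hq ⊢; omega)
    · exact ih _ h3 q (by rw [abs_le] at hq ⊢; omega)

theorem nilpotent_of_bad (hS : S.Reset) (n : ℕ)
    (hb : ∃ s t, (S.comp n).bad (pay (S.comp n) s t).1 (pay (S.comp n) s t).2 = true) :
    Nilpotent (caMap 1 (rule e S n)) := by
  obtain ⟨s, t, hst⟩ := hb
  obtain ⟨M, hM⟩ := grid_pay (S.comp n) (max s t)
  have hz : ∀ x p, (((caMap 1 (rule e S n))^[2*M] x p : Fin _) : ℕ) = 0 := by
    intro x p
    by_contra hne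
    have hT : ∀ i j : ℕ, i ≤ M → j ≤ M →
        (((caMap 1 (rule e S n))^[i+j] x (p - M + j) : Fin _) : ℕ) ≠ 0 := by
      intro i j hi hj
      refine ca_iter_ne e S n x (i+j) (2*M - (i+j)) p ?_ _ ?_
      · rw [show i + j + (2*M-(i+j)) = 2 * M by omega]; exact hne
      · rw [abs_le]; omega
    have hG : Grid (S.comp n) M
        (fun i j => hOf e ((caMap 1 (rule e S n))^[(i+1)+j] x (p - M + j) : Fin _))
        (fun i j => vOf e ((caMap 1 (rule e S n))^[i+(j+1)] x (p - M + ((j+1 : ℕ) : ℤ)) : Fin _)) := by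
      intro i j hi hj
      have h1 := hT (i+1) j hi hj.le
      have h2 := hT i (j+1) hi.le hj
      have h3 := hT (i+1) (j+1) hi hj
      have h4 : (((caMap 1 (rule e S n))^[(i+1)+(j+1)] x (p - M + ((j+1:ℕ):ℤ)) : Fin _) : ℕ) =
          stp e S n ((caMap 1 (rule e S n))^[(i+1)+j] x (p - M + j) : Fin _)
            ((caMap 1 (rule e S n))^[i+(j+1)] x (p - M + ((j+1 : ℕ) : ℤ)) : Fin _) := by
        rw [← Nat.add_assoc, Function.iterate_succ_apply'] at h3 ⊢
        rw [(ca_ne e S n _ _ h3).2.2.2]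
        have e1 : p - (M : ℤ) + ((j+1:ℕ):ℤ) - 1 = p - M + j := by push_cast; ring
        have e2 : i + 1 + j = i + (j + 1) := by omega
        rw [e1, e2]
      have hok : okay (S.comp n)
          (hOf e ((caMap 1 (rule e S n))^[(i+1)+j] x (p - M + j) : Fin _))
          (vOf e ((caMap 1 (rule e S n))^[i+(j+1)] x (p - M + ((j+1 : ℕ) : ℤ)) : Fin _)) := by
        by_contra hno
        exact h3 (h4.trans (stp_not_ok e S hS n _ _ hno))
      have h5 := stp_ok e S hS n _ _ h1 h2 hok
      refine ⟨hok, ?_, ?_⟩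
      · show hOf e _ = _
        rw [h4]; exact h5.2.1
      · show vOf e _ = _
        rw [h4]; exact h5.2.2
    have := hM M _ _ hG le_rfl s t (le_max_left _ _) (le_max_right _ _)
    rw [this] at hst
    exact absurd hst (by simp)
  refine ⟨2*M, fun _ => 0, ?_⟩
  ext y
  simp only [Set.mem_range, Set.mem_singleton_iff]
  have h0 : ∀ x, (caMap 1 (rule e S n))^[2*M] x = fun _ => 0 := by
    intro x; funext p; exact Fin.ext (hz x p)
  constructor
  · rintro ⟨x, rfl⟩; exact h0 x
  · rintro rfl; exact ⟨fun _ => 0, h0 _⟩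

/-- Counter of a lane. -/
def cnt : Lane (P × ℕ) → ℕ
  | .act x => x.2
  | _ => 0

/-- Numerical state for a pair of signals. -/
def encS (h : Sig (P × ℕ)) (v : Sig Q) : ℕ := 1 + (e (h.map Prod.fst, v) : ℕ) + m * cnt h.s

theorem hOf_encS (h : Sig (P × ℕ)) (v : Sig Q) : hOf e (encS e h v) = h := by
  unfold encS
  rw [hOf_code, Equiv.symm_apply_apply]
  obtain ⟨_, _, _, _, _, _, s⟩ := h
  cases s <;> simp [Sig.map, Lane.map, cnt]

theorem vOf_encS (h : Sig (P × ℕ)) (v : Sig Q) : vOf e (encS e h v) = v := by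
  unfold encS
  rw [vOf_code, Equiv.symm_apply_apply]

/-- Truncation of the counter. -/
def trunc (n : ℕ) (x : P × ℕ) : P × ℕ := (x.1, min x.2 n)

theorem encS_lt (n : ℕ) (h : Sig (P × ℕ)) (v : Sig Q) :
    encS e (h.map (trunc n)) v < m * (n+1) + 1 := by
  unfold encS
  have h1 := (e ((h.map (trunc n)).map Prod.fst, v)).2
  have h2 : cnt (h.map (trunc n)).s ≤ n := by
    cases hs : h.s <;> simp [Sig.map, Lane.map, hs, cnt, trunc]
  have h3 := Nat.mul_le_mul_left m h2
  rw [Nat.mul_succ]; omega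

theorem grid_trunc (n : ℕ) (N : ℕ) (H V) (hG : Grid (S.comp n) N H V) :
    Grid (S.comp n) N (fun i j => (H i j).map (trunc n)) V := by
  intro i j hi hj
  obtain ⟨h1, h2, h3⟩ := hG i j hi hj
  have key := nat_step (S.comp n) (S.comp n) (trunc n) (by simp [trunc, Sym.comp]) rfl
    (fun _ => True) trivial (by
      rintro ⟨p, k⟩ y -
      refine ⟨?_, rfl⟩
      have hd : decide (min k n < n) = decide (k < n) := by simp
      simp only [Sym.comp, trunc, hd]
      generalize S.psi (decide (k < n)) p y = z
      obtain ⟨⟨p', o⟩, y'⟩ := z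
      have : o.eval n (min k n) = min (o.eval n k) n := by
        cases o <;> simp [Op.eval]
        omega
      simp [this]) (H i j) (V i j) (by cases (H i j).s <;> trivial)
  refine ⟨key.1.2 h1, ?_, ?_⟩
  · show (H i (j+1)).map _ = _
    rw [h2, key.2.1]
  · rw [h3, key.2.2]

theorem not_nilpotent (hS : S.Reset) (n : ℕ)
    (hb : ∀ s t, (S.comp n).bad (pay (S.comp n) s t).1 (pay (S.comp n) s t).2 = false) :
    ¬ Nilpotent (caMap 1 (rule e S n)) := by
  rintro ⟨J, c, hc⟩
  have hG : ∀ N, Grid (S.comp n) N (fun i j => (exH (S.comp n) i j).map (trunc n))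
      (exV (S.comp n)) := fun N => grid_trunc S n N _ _ (exGrid (S.comp n) hb N)
  set V := exV (S.comp n) with hV
  set H0 := exH (S.comp n) with hH0
  let x0 : Config (Fin (m * (n+1) + 1)) := fun p =>
    if 0 ≤ p ∧ p ≤ 2 * J then
      ⟨encS e ((H0 (2*J - p.toNat) (p.toNat+1)).map (trunc n)) (V (2*J - p.toNat + 1) p.toNat),
        encS_lt e n _ _⟩ else 0
  have claim : ∀ t p : ℕ, t ≤ p → p + t ≤ 2 * J →
      (((caMap 1 (rule e S n))^[t] x0 p : Fin _) : ℕ) ≠ 0 ∧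
      hOf e ((caMap 1 (rule e S n))^[t] x0 p : Fin _) = (H0 (2*J+t-p) (p+1)).map (trunc n) ∧
      vOf e ((caMap 1 (rule e S n))^[t] x0 p : Fin _) = V (2*J+t-p+1) p := by
    intro t
    induction t with
    | zero =>
      intro p _ hp
      have : ((x0 p : Fin _) : ℕ) =
          encS e ((H0 (2*J - p) (p+1)).map (trunc n)) (V (2*J - p + 1) p) := by
        simp only [x0]
        rw [if_pos (by omega)]
        simp
      simp only [Function.iterate_zero, id, this, hOf_encS, vOf_encS, Nat.add_zero, and_self,
        and_true]
      unfold encS; omega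
    | succ t ih =>
      intro p h1 h2
      obtain ⟨p, rfl⟩ : ∃ p', p = p' + 1 := ⟨p - 1, by omega⟩
      obtain ⟨a1, a2, -⟩ := ih p (by omega) (by omega)
      obtain ⟨b1, -, b3⟩ := ih (p+1) (by omega) (by omega)
      obtain ⟨c1, -, -⟩ := ih (p+2) (by omega) (by omega)
      obtain ⟨g1, g2, g3⟩ := hG (2*J+2*p+5) (2*J+t-p) (p+1) (by omega) (by omega)
      have hst : (((caMap 1 (rule e S n))^[t+1] x0 ((p+1 : ℕ) : ℤ) : Fin _) : ℕ) =
          stp e S n ((caMap 1 (rule e S n))^[t] x0 (p : ℤ) : Fin _)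
            ((caMap 1 (rule e S n))^[t] x0 ((p+1 : ℕ) : ℤ) : Fin _) := by
        rw [Function.iterate_succ_apply', ca_step]
        have e1 : ((p+1 : ℕ) : ℤ) + 1 = ((p + 2 : ℕ) : ℤ) := by push_cast; ring
        have e2 : ((p+1 : ℕ) : ℤ) - 1 = (p : ℤ) := by push_cast; ring
        rw [e1, e2, if_neg c1]
      rw [show 2*J+t-(p+1)+1 = 2*J+t-p by omega] at b3
      dsimp only at g1 g2 g3
      rw [← a2, ← b3] at g1
      have h5 := stp_ok e S hS n _ _ a1 b1 g1
      rw [hst, show 2*J+(t+1)-(p+1) = 2*J+t-p by omega]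
      refine ⟨h5.1, ?_, ?_⟩
      · rw [h5.2.1, g2, a2, b3]
      · rw [h5.2.2, g3, a2, b3]
  have hz : ∀ t, (caMap 1 (rule e S n))^[t] (fun _ => 0) = fun _ => 0 := by
    intro t
    induction t with
    | zero => rfl
    | succ t ih =>
      rw [Function.iterate_succ_apply', ih]
      funext i
      apply Fin.ext
      rw [ca_step]; simp
  have r1 : (caMap 1 (rule e S n))^[J] x0 = c := by
    have : (caMap 1 (rule e S n))^[J] x0 ∈ Set.range (caMap 1 (rule e S n))^[J] := ⟨_, rfl⟩
    rwa [hc] at this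
  have r2 : (caMap 1 (rule e S n))^[J] (fun _ => 0) = c := by
    have : (caMap 1 (rule e S n))^[J] (fun _ => 0) ∈ Set.range (caMap 1 (rule e S n))^[J] :=
      ⟨_, rfl⟩
    rwa [hc] at this
  have := (claim J J le_rfl (by omega)).1
  rw [r1, ← r2, hz] at this
  exact this rfl

theorem nilpotent_iff (hS : S.Reset) (n : ℕ) : Nilpotent (caMap 1 (rule e S n)) ↔
    ∃ s t, (S.comp n).bad (pay (S.comp n) s t).1 (pay (S.comp n) s t).2 = true := by
  refine ⟨fun h => ?_, nilpotent_of_bad e S hS n⟩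
  by_contra hno
  push Not at hno
  exact not_nilpotent e S hS n (fun s t => by simpa using hno s t) h

end CA
end NilCA

namespace NilCA
open Encodable

/-! ### Encodings of local rules -/

/-- Code of a word of length three. -/
def wcode (a b c : ℕ) : ℕ :=
  Nat.succ (Nat.pair (Nat.pair 0 a) (Nat.succ (Nat.pair (Nat.pair 1 b)
    (Nat.succ (Nat.pair (Nat.pair 2 c) 0)))))

theorem encode_word (N : ℕ) (w : Fin (2 * 1 + 1) → Fin (N+1)) :
    encode w = wcode (w 0) (w 1) (w 2) := rfl

theorem encode_list_congr {α β : Type} [Encodable α] [Encodable β] (v : α → β)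
    (hv : ∀ a, encode (v a) = encode a) (l : List α) : encode l = encode (l.map v) := by
  induction l with
  | nil => rfl
  | cons a l ih => rw [List.map_cons, encode_list_cons, encode_list_cons, ih, hv]

/-- A list of numbers with the positions attached. -/
def idxList (l : List ℕ) : List ℕ := (List.range l.length).map (fun i => Nat.pair i (l.getD i 0))

theorem cast_fin_val {a b : ℕ} (h : a = b) (h' : Fin a = Fin b) (i : Fin a) :
    ((Equiv.cast h' i : Fin b) : ℕ) = i := by
  subst h; rfl

theorem encode_finPi {c k : ℕ} (f : Fin c → Fin k) :
    @encode _ (finPi c (fun _ => Fin k)) f =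
      encode (List.ofFn (fun i => Nat.pair (i : ℕ) (f i : ℕ))) := by
  have h1 : @encode _ (finPi c (fun _ => Fin k)) f =
      encode (List.Vector.ofFn (fun i => (⟨i, f i⟩ : Σ _ : Fin c, Fin k))).toList := rfl
  rw [h1, List.Vector.toList_ofFn, encode_list_congr
    (fun x : (Σ _ : Fin c, Fin k) => Nat.pair (x.1 : ℕ) (x.2 : ℕ)) (fun a => rfl), List.map_ofFn]
  rfl

theorem encode_rule {α : Type} [Encodable α] [Fintype α] {k : ℕ} (f : α → Fin k) :
    @encode _ fintypeArrowOfEncodable f =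
      encode (idxList ((sortedUniv α).map (fun a => (f a : ℕ)))) := by
  have h1 : @encode _ fintypeArrowOfEncodable f =
    @encode _ (finPi (Fintype.card α) (fun _ => Fin k)) (fun i => f (fintypeEquivFin.symm i)) := rfl
  rw [h1, encode_finPi]
  congr 1
  apply List.ext_getElem
  · simp [idxList]
  · intro i hi hi'
    have hi2 : i < (sortedUniv α).length := by simpa using hi
    simp only [List.getElem_ofFn, idxList, List.getElem_map, List.getElem_range]
    rw [List.getD_eq_getElem _ _ (by simpa using hi2), List.getElem_map]
    congr 3
    rw [Equiv.symm_apply_eq]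
    apply Fin.ext
    simp only [fintypeEquivFin, Equiv.trans_apply]
    rw [cast_fin_val (length_sortedUniv α)]
    have : (sortedUniv α)[i]'hi2 = (@List.Nodup.getEquivOfForallMemList α
      (Encodable.decidableEqOfEncodable _) (sortedUniv α) (sortedUniv_nodup α) mem_sortedUniv)
        ⟨i, hi2⟩ := rfl
    rw [this, Equiv.symm_apply_apply]

theorem sorted_codes {α : Type} [Encodable α] [Fintype α] (B : ℕ) (p : ℕ → Bool)
    (hp : ∀ k, p k = true ↔ ∃ w : α, encode w = k) (hB : ∀ w : α, encode w < B) :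
    (sortedUniv α).map encode = (List.range B).filter p := by
  have s1 : ((sortedUniv α).map encode).Pairwise (· ≤ ·) := by
    rw [List.pairwise_map]
    exact Finset.pairwise_sort Finset.univ (Order.Preimage (Encodable.encode' α) (· ≤ ·))
  have s2 : ((List.range B).filter p).Pairwise (· ≤ ·) :=
    (List.pairwise_lt_range.imp le_of_lt).filter _
  refine List.Perm.eq_of_pairwise (fun a b _ _ => le_antisymm) s1 s2 ?_
  refine (List.perm_ext_iff_of_nodup ?_ ?_).2 ?_
  · exact (sortedUniv_nodup α).map encode_injective
  · exact List.nodup_range.filter _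
  · intro k
    simp only [List.mem_map, mem_sortedUniv, true_and, List.mem_filter, List.mem_range, hp]
    constructor
    · rintro ⟨w, rfl⟩; exact ⟨hB w, w, rfl⟩
    · rintro ⟨_, h⟩; exact h

def ka (k : ℕ) : ℕ := (Nat.unpair (Nat.unpair (k-1)).1).2
def kt (k : ℕ) : ℕ := (Nat.unpair (k-1)).2
def isCode (N k : ℕ) : Prop := k = wcode (ka k) (ka (kt k)) (ka (kt (kt k))) ∧ ka k ≤ N ∧
  ka (kt k) ≤ N ∧ ka (kt (kt k)) ≤ N
instance (N k : ℕ) : Decidable (isCode N k) := by unfold isCode; infer_instance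

theorem ka_wcode (a b c : ℕ) : ka (wcode a b c) = a ∧ ka (kt (wcode a b c)) = b ∧
    ka (kt (kt (wcode a b c))) = c := by
  simp [ka, kt, wcode]

theorem wcode_mono {a b c N : ℕ} (ha : a ≤ N) (hb : b ≤ N) (hc : c ≤ N) :
    wcode a b c ≤ wcode N N N := by
  have pm : ∀ {x y x' y' : ℕ}, x ≤ x' → y ≤ y' → Nat.pair x y ≤ Nat.pair x' y' := by
    intro x y x' y' h h'
    exact (StrictMono.monotone (fun _ _ h => Nat.pair_lt_pair_left _ h) h).trans
      (StrictMono.monotone (fun _ _ h => Nat.pair_lt_pair_right _ h) h')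
  unfold wcode
  exact Nat.succ_le_succ (pm (pm le_rfl ha) (Nat.succ_le_succ (pm (pm le_rfl hb)
    (Nat.succ_le_succ (pm (pm le_rfl hc) le_rfl)))))

/-- The table of a ternary rule as a list of numbers. -/
def ruleList (N : ℕ) (F : ℕ → ℕ → ℕ → ℕ) : List ℕ :=
  (List.range (wcode N N N + 1)).filterMap (fun k =>
    if isCode N k then some (F (ka k) (ka (kt k)) (ka (kt (kt k)))) else none)

theorem filterMap_ite {α β : Type} (p : α → Prop) [DecidablePred p] (v : α → β) (l : List α) :
    l.filterMap (fun k => if p k then some (v k) else none) =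
      (l.filter (fun k => decide (p k))).map v := by
  induction l with
  | nil => rfl
  | cons a l ih => by_cases h : p a <;> simp [h, ih]

theorem encode_rule3 (N : ℕ) (f : (Fin (2*1+1) → Fin (N+1)) → Fin (N+1)) (F : ℕ → ℕ → ℕ → ℕ)
    (hF : ∀ w, (f w : ℕ) = F (w 0) (w 1) (w 2)) : 
    @encode _ fintypeArrowOfEncodable f = encode (idxList (ruleList N F)) := by
  rw [encode_rule, ruleList, filterMap_ite, ← sorted_codes (α := Fin (2*1+1) → Fin (N+1))]
  · rw [List.map_map]
    congr 2
    apply List.map_congr_left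
    intro w _
    simp only [Function.comp, encode_word, ka_wcode, hF]
  · intro k
    simp only [decide_eq_true_eq]
    constructor
    · rintro ⟨h, h1, h2, h3⟩
      refine ⟨![⟨_, Nat.lt_succ_of_le h1⟩, ⟨_, Nat.lt_succ_of_le h2⟩, ⟨_, Nat.lt_succ_of_le h3⟩], ?_⟩
      rw [encode_word]
      exact h.symm
    · rintro ⟨w, rfl⟩
      rw [encode_word, isCode]
      obtain ⟨h1, h2, h3⟩ := ka_wcode (w 0) (w 1) (w 2)
      rw [h1, h2, h3]
      exact ⟨rfl, Nat.le_of_lt_succ (w 0).2, Nat.le_of_lt_succ (w 1).2, Nat.le_of_lt_succ (w 2).2⟩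
  · intro w
    rw [encode_word]
    exact Nat.lt_succ_of_le (wcode_mono (Nat.le_of_lt_succ (w 0).2) (Nat.le_of_lt_succ (w 1).2)
      (Nat.le_of_lt_succ (w 2).2))

/-! ### Computability of the reduction -/

theorem ka_prim : Primrec ka :=
  Primrec.snd.comp (Primrec.unpair.comp (Primrec.fst.comp (Primrec.unpair.comp
    (Primrec.nat_sub.comp Primrec.id (Primrec.const 1)))))
theorem kt_prim : Primrec kt :=
  Primrec.snd.comp (Primrec.unpair.comp (Primrec.nat_sub.comp Primrec.id (Primrec.const 1)))

theorem wcode_prim {α : Type} [Primcodable α] {a b c : α → ℕ} (ha : Primrec a) (hb : Primrec b)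
    (hc : Primrec c) : Primrec (fun x => wcode (a x) (b x) (c x)) := by
  unfold wcode
  exact Primrec.succ.comp (Primrec₂.natPair.comp (Primrec₂.natPair.comp (Primrec.const 0) ha)
    (Primrec.succ.comp (Primrec₂.natPair.comp (Primrec₂.natPair.comp (Primrec.const 1) hb)
    (Primrec.succ.comp (Primrec₂.natPair.comp (Primrec₂.natPair.comp (Primrec.const 2) hc)
      (Primrec.const 0))))))

theorem ruleList_prim (Nf : ℕ → ℕ) (hN : Primrec Nf) (F : ℕ → ℕ → ℕ → ℕ → ℕ)
    (hF : Primrec (fun p : ℕ × ℕ × ℕ × ℕ => F p.1 p.2.1 p.2.2.1 p.2.2.2)) :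
    Primrec (fun n => ruleList (Nf n) (F n)) := by
  unfold ruleList
  refine Primrec.listFilterMap (Primrec.list_range.comp (Primrec.succ.comp
    (wcode_prim hN hN hN))) ?_
  have k0 : Primrec (fun p : ℕ × ℕ => p.2) := Primrec.snd
  have n0 : Primrec (fun p : ℕ × ℕ => Nf p.1) := hN.comp Primrec.fst
  have a0 : Primrec (fun p : ℕ × ℕ => ka p.2) := ka_prim.comp k0
  have b0 : Primrec (fun p : ℕ × ℕ => ka (kt p.2)) := ka_prim.comp (kt_prim.comp k0)
  have c0 : Primrec (fun p : ℕ × ℕ => ka (kt (kt p.2))) :=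
    ka_prim.comp (kt_prim.comp (kt_prim.comp k0))
  refine Primrec.ite (c := fun p : ℕ × ℕ => isCode (Nf p.1) p.2) ?_ ?_ (Primrec.const none)
  · exact (Primrec.eq.comp k0 (wcode_prim a0 b0 c0)).and ((Primrec.nat_le.comp a0 n0).and
      ((Primrec.nat_le.comp b0 n0).and (Primrec.nat_le.comp c0 n0)))
  · exact Primrec.option_some.comp (hF.comp (Primrec.fst.pair (a0.pair (b0.pair c0))))

theorem idxList_prim : Primrec idxList := by
  unfold idxList
  refine Primrec.list_map (Primrec.list_range.comp Primrec.list_length) ?_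
  exact Primrec₂.natPair.comp Primrec.snd
    ((Primrec.list_getD 0).comp Primrec.fst Primrec.snd)

def Op.num : Op → ℕ
  | .keep => 0
  | .zero => 1
  | .inc => 2

theorem Op.eval_num (n k : ℕ) (o : Op) :
    o.eval n k = if o.num = 0 then k else if o.num = 1 then 0 else min (k+1) n := by
  cases o <;> simp [Op.num, Op.eval]

section
variable {P Q : Type} {m : ℕ} [NeZero m] (e : Sig P × Sig Q ≃ Fin m) (S : Sym P Q)

theorem stp_eq (n x y : ℕ) : stp e S n x y = if x = 0 ∨ y = 0 then 0 else
    (((table e S (decide ((x-1)/m < n)) (Fin.ofNat m (x-1)) (Fin.ofNat m (y-1))).map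
      (fun r => ((r.1 : ℕ), r.2.num))).map
      (fun r => 1 + r.1 + m * (if r.2 = 0 then (x-1)/m else if r.2 = 1 then 0
        else min ((x-1)/m+1) n))).getD 0 := by
  rw [stp, Option.map_map]
  simp only [Function.comp_def, Op.eval_num]

theorem stp_prim : Primrec (fun p : ℕ × ℕ × ℕ => stp e S p.1 p.2.1 p.2.2) := by
  simp only [stp_eq]
  have n0 : Primrec (fun p : ℕ × ℕ × ℕ => p.1) := Primrec.fst
  have x0 : Primrec (fun p : ℕ × ℕ × ℕ => p.2.1) := Primrec.fst.comp Primrec.snd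
  have y0 : Primrec (fun p : ℕ × ℕ × ℕ => p.2.2) := Primrec.snd.comp Primrec.snd
  have x1 : Primrec (fun p : ℕ × ℕ × ℕ => p.2.1 - 1) :=
    Primrec.nat_sub.comp x0 (Primrec.const 1)
  have y1 : Primrec (fun p : ℕ × ℕ × ℕ => p.2.2 - 1) :=
    Primrec.nat_sub.comp y0 (Primrec.const 1)
  have k1 : Primrec (fun p : ℕ × ℕ × ℕ => (p.2.1 - 1) / m) :=
    Primrec.nat_div.comp x1 (Primrec.const m)
  have d1 : Primrec (fun p : ℕ × ℕ × ℕ => decide ((p.2.1 - 1) / m < p.1)) :=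
    (Primrec.nat_lt.comp k1 n0).decide
  have f1 : Primrec (fun p : ℕ × ℕ × ℕ => Fin.ofNat m (p.2.1 - 1)) :=
    Primrec.fin_val_iff.1 (Primrec.nat_mod.comp x1 (Primrec.const m))
  have f2 : Primrec (fun p : ℕ × ℕ × ℕ => Fin.ofNat m (p.2.2 - 1)) :=
    Primrec.fin_val_iff.1 (Primrec.nat_mod.comp y1 (Primrec.const m))
  have T : Primrec (fun q : Bool × Fin m × Fin m => (table e S q.1 q.2.1 q.2.2).map
      (fun r => ((r.1 : ℕ), r.2.num))) := Primrec.dom_finite _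
  refine Primrec.ite ((Primrec.eq.comp x0 (Primrec.const 0)).or
    (Primrec.eq.comp y0 (Primrec.const 0))) (Primrec.const 0) ?_
  refine Primrec.option_getD.comp ?_ (Primrec.const 0)
  refine Primrec.option_map (T.comp (d1.pair (f1.pair f2))) ?_
  have r1 : Primrec (fun q : (ℕ × ℕ × ℕ) × (ℕ × ℕ) => q.2.1) := Primrec.fst.comp Primrec.snd
  have r2 : Primrec (fun q : (ℕ × ℕ × ℕ) × (ℕ × ℕ) => q.2.2) := Primrec.snd.comp Primrec.snd
  have k2 : Primrec (fun q : (ℕ × ℕ × ℕ) × (ℕ × ℕ) => (q.1.2.1 - 1) / m) := k1.comp Primrec.fst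
  have n2 : Primrec (fun q : (ℕ × ℕ × ℕ) × (ℕ × ℕ) => q.1.1) := n0.comp Primrec.fst
  refine Primrec.nat_add.comp (Primrec.nat_add.comp (Primrec.const 1) r1)
    (Primrec.nat_mul.comp (Primrec.const m) ?_)
  refine Primrec.ite (Primrec.eq.comp r2 (Primrec.const 0)) k2 ?_
  refine Primrec.ite (Primrec.eq.comp r2 (Primrec.const 1)) (Primrec.const 0) ?_
  exact Primrec.nat_min.comp (Primrec.succ.comp k2) n2

/-- The code of the automaton. -/
def code (n : ℕ) : NilCode := ⟨m * (n+1), 1, rule e S n, 0⟩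

theorem encode_code (n : ℕ) : encode (code e S n) =
    Nat.pair (m * (n+1)) (Nat.pair 1 (Nat.pair
      (encode (idxList (ruleList (m * (n+1)) (fun a b c => if c = 0 then 0 else stp e S n a b)))) 0)) := by
  unfold code
  rw [encode_sigma_val, encode_sigma_val, encode_prod_val,
    encode_rule3 (m * (n+1)) (rule e S n) (fun a b c => if c = 0 then 0 else stp e S n a b)]
  · rfl
  · intro w
    unfold rule
    by_cases h : w 2 = 0
    · simp [h]
    · have : (w 2 : ℕ) ≠ 0 := fun h' => h (Fin.ext h')
      simp [h]

theorem encode_code_prim : Primrec (fun n => encode (code e S n)) := by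
  simp only [encode_code]
  have hN : Primrec (fun n : ℕ => m * (n+1)) := Primrec.nat_mul.comp (Primrec.const m) Primrec.succ
  refine Primrec₂.natPair.comp hN (Primrec₂.natPair.comp (Primrec.const 1)
    (Primrec₂.natPair.comp (Primrec.encode.comp (idxList_prim.comp (ruleList_prim _ hN
      (fun n a b c => if c = 0 then 0 else stp e S n a b) ?_))) (Primrec.const 0)))
  refine Primrec.ite (Primrec.eq.comp (Primrec.snd.comp (Primrec.snd.comp Primrec.snd))
    (Primrec.const 0)) (Primrec.const 0) ?_
  exact (stp_prim e S).comp (Primrec.fst.pair ((Primrec.fst.comp Primrec.snd).pair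
    (Primrec.fst.comp (Primrec.snd.comp Primrec.snd))))

end

theorem main : ¬ ∃ g : ℕ → Bool, Computable g ∧
        ∀ c : NilCode, SpreadingRule c.2.2.1 c.2.2.2 →
          (g (Encodable.encode c) = true ↔ Nilpotent (caMap c.2.1 c.2.2.1)) := by
  rintro ⟨g, hg, hc⟩
  obtain ⟨Γ, Λ, i1, i2, i3, i4, M, q0, c0, c1, c2, T, hT, hT', hno⟩ := exists_machine
  let S := tmSym M q0 c0 c1 c2
  obtain ⟨m, ⟨e⟩⟩ := Finite.exists_equiv_fin
    (Sig (HP (Γ × Option Λ)) × Sig (VP (Γ × Option Λ)))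
  have hm : NeZero m := ⟨by
    rintro rfl
    exact (e (⟨0, 0, 0, true, 0, 0, .blk⟩, ⟨0, 0, 0, true, 0, 0, .blk⟩)).elim0⟩
  apply hno
  rw [ComputablePred.computable_iff]
  refine ⟨fun n => g (encode (code e S n)), hg.comp (encode_code_prim e S).to_comp, ?_⟩
  funext n
  apply propext
  rw [tm_bad_iff M q0 c0 c1 c2 n (hT n) (hT' n)]
  rw [hc (code e S n) (rule_spreading e S n)]
  exact (nilpotent_iff e S (tmSym_reset M q0 c0 c1 c2) n).symm

end NilCA

/-- The nilpotency problem for cellular automata with a spreading state is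
undecidable: no computable predicate decides, among the codes `(n, r, f, θ)` such
that `θ` is spreading, whether the coded cellular automaton is nilpotent. -/
theorem nilpotency_spreading_undecidable :
    ¬ ∃ g : ℕ → Bool, Computable g ∧
        ∀ c : NilCode, SpreadingRule c.2.2.1 c.2.2.2 →
          (g (Encodable.encode c) = true ↔ Nilpotent (caMap c.2.1 c.2.2.1)) := by
  exact NilCA.main
end

section
/- Let N be a cellular automaton on a finite alphabet A admitting a spreading state θ ∈ A. Then N is nilpotent if and only if for every configuration x ∈ A^ℤ there exist i ∈ ℤ and j ∈ ℕ such that N^j(x)_i = θ. -/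
theorem spread_iter {A : Type*} (r : ℕ) (f : (Fin (2 * r + 1) → A) → A) (θ : A)
    (hθ : SpreadingRule f θ) (y : Config A) (p : ℤ) (hy : y p = θ) (k : ℕ) :
    ∀ q : ℤ, |q - p| ≤ (r : ℤ) * k → (caMap r f)^[k] y q = θ := by
  induction k with
  | zero =>
    intro q hq
    have : q = p := by
      have h := abs_le.1 hq
      push_cast at h
      simp only [mul_zero] at h
      omega
    simpa [this] using hy
  | succ k ih =>
    intro q hq
    rw [Function.iterate_succ_apply']
    apply hθ
    have hnn : (0 : ℤ) ≤ (r : ℤ) * k := by positivity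
    have h := abs_le.1 hq
    push_cast at h
    rw [mul_add, mul_one] at h
    generalize hm : (r : ℤ) * k = m at *
    obtain ⟨s, hs1, hs2, hs3, hs4⟩ : ∃ s : ℤ, -m ≤ s - p ∧ s - p ≤ m ∧ q - r ≤ s ∧ s ≤ q + r :=
      ⟨max (p - m) (min (p + m) q), by omega, by omega, by omega, by omega⟩
    refine ⟨⟨(s - (q - r)).toNat, by omega⟩, ?_⟩
    have e : q - (r : ℤ) + (((s - (q - r)).toNat : ℕ) : ℤ) = s := by omega
    simp only [e]
    exact ih s (abs_le.2 ⟨hs1, hs2⟩)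

theorem iter_shift {A : Type*} (r : ℕ) (f : (Fin (2 * r + 1) → A) → A) (x : Config A) (p : ℤ)
    (k : ℕ) : ∀ i, (caMap r f)^[k] (fun i => x (i + p)) i = (caMap r f)^[k] x (i + p) := by
  induction k with
  | zero => intro i; rfl
  | succ k ih =>
    intro i
    rw [Function.iterate_succ_apply', Function.iterate_succ_apply']
    refine congrArg f (funext fun j => ?_)
    rw [ih]
    exact congrArg _ (by ring)

theorem iter_zero {A : Type*} (f : (Fin (2 * 0 + 1) → A) → A) (x : Config A) (p : ℤ)
    (k : ℕ) : ∀ i, (caMap 0 f)^[k] (fun _ => x p) i = (caMap 0 f)^[k] x p := by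
  induction k with
  | zero => intro i; rfl
  | succ k ih =>
    intro i
    rw [Function.iterate_succ_apply', Function.iterate_succ_apply']
    refine congrArg f (funext fun j => ?_)
    rw [ih]
    have := j.2
    exact congrArg _ (by push_cast; omega)

/-- A cellular automaton `N` on a finite alphabet with a spreading state `θ` is
nilpotent iff in the orbit of every configuration the state `θ` eventually appears
somewhere. -/
theorem nilpotent_iff_spreading_state_appears (A : Type*) [Fintype A]
    (r : ℕ) (f : (Fin (2 * r + 1) → A) → A) (θ : A) (hθ : SpreadingRule f θ) :
    Nilpotent (caMap r f) ↔
      ∀ x : Config A, ∃ (i : ℤ) (j : ℕ), (caMap r f)^[j] x i = θ := by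
  constructor
  · rintro ⟨J, c, hc⟩ x
    have h1 : (caMap r f)^[J] x = c := by
      have : (caMap r f)^[J] x ∈ Set.range (caMap r f)^[J] := ⟨x, rfl⟩
      rwa [hc] at this
    have h2 : (caMap r f)^[J] (fun _ => θ) = c := by
      have : (caMap r f)^[J] (fun _ => θ) ∈ Set.range (caMap r f)^[J] := ⟨_, rfl⟩
      rwa [hc] at this
    refine ⟨0, J, ?_⟩
    rw [h1, ← h2]
    exact spread_iter r f θ hθ _ 0 rfl J 0 (by simp; positivity)
  · intro H
    let _ : TopologicalSpace A := ⊥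
    have : DiscreteTopology A := ⟨rfl⟩
    have hF : Continuous (caMap r f) := by
      refine continuous_pi fun i => ?_
      have : Continuous f := continuous_of_discreteTopology
      exact this.comp (continuous_pi fun j => continuous_apply _)
    obtain ⟨t, ht⟩ := (isCompact_univ (X := Config A)).elim_finite_subcover
      (fun ij : ℤ × ℕ => {x | (caMap r f)^[ij.2] x ij.1 = θ})
      (fun ij => (isOpen_discrete ({θ} : Set A)).preimage
        ((continuous_apply ij.1).comp (hF.iterate ij.2)))
      (by
        intro x _
        obtain ⟨i, j, h⟩ := H x
        exact Set.mem_iUnion.2 ⟨(i, j), h⟩)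
    let M : ℕ := t.sup fun ij => ij.1.natAbs + ij.2
    have key : ∀ x : Config A, ∃ (i : ℤ) (j : ℕ), i.natAbs + j ≤ M ∧ (caMap r f)^[j] x i = θ := by
      intro x
      have := ht (Set.mem_univ x)
      simp only [Set.mem_iUnion] at this
      obtain ⟨ij, hij, h⟩ := this
      exact ⟨ij.1, ij.2, Finset.le_sup (f := fun ij : ℤ × ℕ => ij.1.natAbs + ij.2) hij, h⟩
    have main : ∀ (x : Config A) (p : ℤ), (caMap r f)^[2 * M] x p = θ := by
      intro x p
      rcases Nat.eq_zero_or_pos r with h0 | hr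
      · subst h0
        obtain ⟨i, j, hM, h⟩ := key (fun _ => x p)
        rw [iter_zero] at h
        rw [show 2 * M = (2 * M - j) + j by omega, Function.iterate_add_apply]
        exact spread_iter 0 f θ hθ _ p h _ p (by simp)
      · obtain ⟨i, j, hM, h⟩ := key (fun i => x (i + p))
        rw [iter_shift] at h
        rw [show 2 * M = (2 * M - j) + j by omega, Function.iterate_add_apply]
        refine spread_iter r f θ hθ _ (i + p) h _ p ?_
        have h1 : ((2 * M - j : ℕ) : ℤ) ≤ (r : ℤ) * ((2 * M - j : ℕ) : ℤ) :=
          le_mul_of_one_le_left (by positivity) (by exact_mod_cast hr)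
        refine le_trans ?_ h1
        rw [abs_le]
        omega
    refine ⟨2 * M, fun _ => θ, ?_⟩
    ext y
    simp only [Set.mem_range, Set.mem_singleton_iff]
    constructor
    · rintro ⟨x, rfl⟩
      exact funext (main x)
    · rintro rfl
      exact ⟨fun _ => θ, funext (main _)⟩
end
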